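/- Let n ≥ 1 be an integer, α ∈ (0,n), β > 0 and A > 0, and assume α < β. For each m > 0 let E_m be a minimizer at mass m of E_{α,β,A}, and let E_m* = (|B|/m)^{1/n} E_m be its rescaling to volume |B|. Then the Hausdorff distance between the essential boundary of E_m* and the unit sphere ∂B tends to 0 as m → +∞. -/

import Mathlib

open MeasureTheory Metric Filter ENNReal Pointwise

noncomputable section

/-- The Lebesgue density of `E` at `x` equals `d`. -/
def HasDensity {n : ℕ} (E : Set (EuclideanSpace ℝ (Fin n)))
    (x : EuclideanSpace ℝ (Fin n)) (d : ℝ) : Prop :=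
  Filter.Tendsto
    (fun r : ℝ => (volume (E ∩ Metric.ball x r)).toReal / (volume (Metric.ball x r)).toReal)
    (nhdsWithin 0 (Set.Ioi 0)) (nhds d)

/-- The essential boundary of `E`: points where `E` has neither density 0 nor density 1. -/
def essBoundary {n : ℕ} (E : Set (EuclideanSpace ℝ (Fin n))) :
    Set (EuclideanSpace ℝ (Fin n)) :=
  {x | ¬ HasDensity E x 0 ∧ ¬ HasDensity E x 1}

/-- The perimeter of `E`: the `(n-1)`-dimensional Hausdorff measure of the essential
boundary of `E`. -/
def perimeter {n : ℕ} (E : Set (EuclideanSpace ℝ (Fin n))) : ℝ≥0∞ :=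
  μH[(n : ℝ) - 1] (essBoundary E)

/-- The Riesz energy `V_α(E) = ∫_{E×E} |x-y|^(α-n) dx dy`. -/
def rieszEnergy {n : ℕ} (α : ℝ) (E : Set (EuclideanSpace ℝ (Fin n))) : ℝ≥0∞ :=
  ∫⁻ x in E, ∫⁻ y in E, ENNReal.ofReal (‖x - y‖ ^ (α - (n : ℝ)))

/-- The potential energy `U_{β,A}(E) = A ∫_E |x|^β dx`. -/
def potEnergy {n : ℕ} (β A : ℝ) (E : Set (EuclideanSpace ℝ (Fin n))) : ℝ≥0∞ :=
  ∫⁻ x in E, ENNReal.ofReal (A * ‖x‖ ^ β)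

/-- The total energy `E_{α,β,A} = P + V_α + U_{β,A}`. -/
def totalEnergy {n : ℕ} (α β A : ℝ) (E : Set (EuclideanSpace ℝ (Fin n))) : ℝ≥0∞ :=
  perimeter E + rieszEnergy α E + potEnergy β A E

/-- `E` is a minimizer of `E_{α,β,A}` at mass `m`. -/
def IsMinimizer {n : ℕ} (α β A m : ℝ) (E : Set (EuclideanSpace ℝ (Fin n))) : Prop :=
  MeasurableSet E ∧ volume E = ENNReal.ofReal m ∧
    ∀ F : Set (EuclideanSpace ℝ (Fin n)), MeasurableSet F → volume F = ENNReal.ofReal m →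
      totalEnergy α β A E ≤ totalEnergy α β A F

/-- The unit ball of `ℝⁿ` centered at the origin. -/
def unitBall (n : ℕ) : Set (EuclideanSpace ℝ (Fin n)) := Metric.ball 0 1

/-!
Rescaling a minimizer of mass `m` by the radius `c` of the ball of mass `m` gives a minimizer `F`,
at volume `|B|`, of `δ P + ε V_α + U` with weights `δ = c ^ (-1 - β)` and `ε = c ^ (α - β)`. Both
weights tend to `0`, so `U(F)` tends to its minimal value `U(B)` and, by the bathtub principle, `F`
converges to `B` in measure.

For uniform convergence, cut `F` with `closedBall 0 r`, `r > 1`, or fill it with `ball 0 r`,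
`r < 1`. After restoring the volume by a dilation, the potential energy decreases at first order in
the volume that was moved, because `(n + β) / n * U(B) = A |B|` while the density of the potential
at radius `r` is `A * r ^ β`. Minimality therefore forces the perimeter to increase. Through the
isoperimetric inequality this becomes a differential inequality for the volume of
`F \ closedBall 0 r` (or `ball 0 r \ F`) as a function of `r`, which makes a small volume vanish
after a short interval of radii. Hence the boundary of `F` lies in a thin annulus around the sphere,
and every point of the sphere is close to a boundary point by a density argument.
-/

open scoped Topology

/-! ### Density, essential boundary and perimeter -/

section Density

variable {n : ℕ} {E F D : Set (EuclideanSpace ℝ (Fin n))} {x : EuclideanSpace ℝ (Fin n)} {d : ℝ}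

theorem toReal_volume_ball_pos (x : EuclideanSpace ℝ (Fin n)) {r : ℝ} (hr : 0 < r) :
    0 < (volume (ball x r)).toReal :=
  ENNReal.toReal_pos (measure_ball_pos volume x hr).ne' measure_ball_lt_top.ne

theorem volume_inter_ball_ne_top (E : Set (EuclideanSpace ℝ (Fin n)))
    (x : EuclideanSpace ℝ (Fin n)) (r : ℝ) : volume (E ∩ ball x r) ≠ ∞ :=
  measure_ne_top_of_subset Set.inter_subset_right measure_ball_lt_top.ne

theorem eventually_forall_mem_ball {X : Type*} [PseudoMetricSpace X] {x : X} {p : X → Prop}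
    (h : ∀ᶠ y in 𝓝 x, p y) : ∀ᶠ r : ℝ in 𝓝[>] 0, ∀ y ∈ ball x r, p y := by
  obtain ⟨ε, hε, hp⟩ := Metric.eventually_nhds_iff_ball.1 h
  filter_upwards [Ioo_mem_nhdsGT hε] with r hr y hy
  exact hp y (ball_subset_ball hr.2.le hy)

theorem HasDensity.compl (hE : MeasurableSet E) (h : HasDensity E x d) :
    HasDensity Eᶜ x (1 - d) := by
  refine (tendsto_const_nhds.sub h).congr' ?_
  filter_upwards [self_mem_nhdsWithin] with r hr
  have hsplit : (volume (ball x r)).toReal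
      = (volume (E ∩ ball x r)).toReal + (volume (Eᶜ ∩ ball x r)).toReal := by
    rw [← measure_inter_add_sdiff (ball x r) hE, Set.inter_comm, Set.sdiff_eq,
      Set.inter_comm _ Eᶜ, ENNReal.toReal_add (volume_inter_ball_ne_top _ _ _)
        (volume_inter_ball_ne_top _ _ _)]
  have hpos := toReal_volume_ball_pos x hr
  field_simp
  linarith

theorem HasDensity.congr (hEF : ∀ᶠ y in 𝓝 x, y ∈ E ↔ y ∈ F) (h : HasDensity E x d) :
    HasDensity F x d := by
  refine Tendsto.congr' ?_ h
  filter_upwards [eventually_forall_mem_ball hEF] with r hr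
  rw [show E ∩ ball x r = F ∩ ball x r from Set.ext fun y => and_congr_left (hr y)]

theorem HasDensity.zero_mono (hEF : ∀ᶠ y in 𝓝 x, y ∈ E → y ∈ F) (h : HasDensity F x 0) :
    HasDensity E x 0 := by
  refine squeeze_zero' (Eventually.of_forall fun r => by positivity) ?_ h
  filter_upwards [eventually_forall_mem_ball hEF] with r hr
  gcongr ?_ / _
  exact ENNReal.toReal_mono (volume_inter_ball_ne_top _ _ _)
    (measure_mono fun y hy => ⟨hr y hy.2 hy.1, hy.2⟩)

theorem hasDensity_zero_of_volume_eq_zero {r : ℝ} (hr : 0 < r)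
    (hE : volume (E ∩ ball x r) = 0) : HasDensity E x 0 := by
  refine tendsto_const_nhds.congr' ?_
  filter_upwards [Ioo_mem_nhdsGT hr] with s hs
  rw [measure_mono_null (Set.inter_subset_inter_right E (ball_subset_ball hs.2.le)) hE]
  simp

theorem hasDensity_one_iff (hE : MeasurableSet E) : HasDensity E x 1 ↔ HasDensity Eᶜ x 0 :=
  ⟨fun h => by simpa using h.compl hE, fun h => by simpa using h.compl hE.compl⟩

theorem hasDensity_zero_iff (hE : MeasurableSet E) : HasDensity E x 0 ↔ HasDensity Eᶜ x 1 := by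
  rw [hasDensity_one_iff hE.compl, compl_compl]

theorem HasDensity.one_mono (hE : MeasurableSet E) (hF : MeasurableSet F)
    (hEF : ∀ᶠ y in 𝓝 x, y ∈ E → y ∈ F) (h : HasDensity E x 1) : HasDensity F x 1 :=
  (hasDensity_one_iff hF).2 <| ((hasDensity_one_iff hE).1 h).zero_mono <|
    hEF.mono fun _ hy => mt hy

theorem hasDensity_one_of_volume_eq_zero (hE : MeasurableSet E) {r : ℝ} (hr : 0 < r)
    (h : volume (ball x r \ E) = 0) : HasDensity E x 1 :=
  (hasDensity_one_iff hE).2 <| hasDensity_zero_of_volume_eq_zero hr <| by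
    rwa [Set.inter_comm, ← Set.sdiff_eq]

theorem hasDensity_empty : HasDensity (∅ : Set (EuclideanSpace ℝ (Fin n))) x 0 :=
  hasDensity_zero_of_volume_eq_zero one_pos (by simp)

theorem hasDensity_univ : HasDensity (Set.univ : Set (EuclideanSpace ℝ (Fin n))) x 1 :=
  hasDensity_one_of_volume_eq_zero .univ one_pos (by simp)

theorem ae_hasDensity_one [NeZero n] (hE : MeasurableSet E) :
    ∀ᵐ x, x ∈ E → HasDensity E x 1 := by
  filter_upwards [Besicovitch.ae_tendsto_measure_inter_div_of_measurableSet volume hE] with x hx hxE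
  rw [Set.indicator_of_mem hxE] at hx
  have hx' := (ENNReal.tendsto_toReal (by simp)).comp hx
  rw [Pi.one_apply, toReal_one] at hx'
  refine hx'.congr fun r => ?_
  have hball : (closedBall x r : Set (EuclideanSpace ℝ (Fin n))) =ᵐ[volume] ball x r := by
    rw [← ball_union_sphere]
    exact union_ae_eq_left_of_ae_eq_empty (ae_eq_empty.2 (Measure.addHaar_sphere volume x r))
  rw [Function.comp_apply, ENNReal.toReal_div, measure_congr hball,
    measure_congr ((ae_eq_refl E).inter hball)]

theorem essBoundary_compl (hE : MeasurableSet E) : essBoundary Eᶜ = essBoundary E := by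
  ext x
  rw [essBoundary, essBoundary, Set.mem_ofPred_eq, Set.mem_ofPred_eq, hasDensity_zero_iff hE,
    hasDensity_one_iff hE, and_comm]

theorem perimeter_compl (hE : MeasurableSet E) : perimeter Eᶜ = perimeter E := by
  rw [perimeter, perimeter, essBoundary_compl hE]

theorem essBoundary_empty : essBoundary (∅ : Set (EuclideanSpace ℝ (Fin n))) = ∅ :=
  Set.eq_empty_of_forall_notMem fun _ hx => hx.1 hasDensity_empty

end Density

section Scaling

variable {n : ℕ} {E : Set (EuclideanSpace ℝ (Fin n))} {x : EuclideanSpace ℝ (Fin n)} {c d : ℝ}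

theorem volume_smul (hc : 0 < c) (E : Set (EuclideanSpace ℝ (Fin n))) :
    volume (c • E) = ENNReal.ofReal (c ^ n) * volume E := by
  rw [Measure.addHaar_smul, finrank_euclideanSpace_fin, abs_of_pos (by positivity)]

theorem HasDensity.smul (hc : 0 < c) (h : HasDensity E x d) : HasDensity (c • E) (c • x) d := by
  have hlim : Tendsto (fun r : ℝ => c⁻¹ * r) (𝓝[>] 0) (𝓝[>] 0) := by
    refine tendsto_nhdsWithin_iff.2 ⟨?_, ?_⟩
    · simpa using ((continuous_const_mul c⁻¹).tendsto 0).mono_left nhdsWithin_le_nhds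
    · filter_upwards [self_mem_nhdsWithin] with r hr using mul_pos (inv_pos.2 hc) hr
  refine (h.comp hlim).congr fun r => ?_
  have hball : ball (c • x) r = c • ball x (c⁻¹ * r) := by
    rw [_root_.smul_ball hc.ne', Real.norm_of_nonneg hc.le, mul_inv_cancel_left₀ hc.ne']
  rw [hball, ← Set.smul_set_inter₀ hc.ne', volume_smul hc, volume_smul hc, ENNReal.toReal_mul,
    ENNReal.toReal_mul, ENNReal.toReal_ofReal (by positivity), mul_div_mul_left _ _ (by positivity),
    Function.comp_apply]

theorem hasDensity_smul_iff (hc : 0 < c) : HasDensity (c • E) (c • x) d ↔ HasDensity E x d := by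
  refine ⟨fun h => ?_, fun h => h.smul hc⟩
  simpa only [inv_smul_smul₀ hc.ne'] using h.smul (inv_pos.2 hc)

theorem essBoundary_smul (hc : 0 < c) (E : Set (EuclideanSpace ℝ (Fin n))) :
    essBoundary (c • E) = c • essBoundary E := by
  ext y
  rw [Set.mem_smul_set_iff_inv_smul_mem₀ hc.ne', essBoundary, essBoundary, Set.mem_ofPred_eq,
    Set.mem_ofPred_eq, ← hasDensity_smul_iff (x := c⁻¹ • y) hc,
    ← hasDensity_smul_iff (x := c⁻¹ • y) hc, smul_inv_smul₀ hc.ne']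

theorem perimeter_smul [NeZero n] (hc : 0 < c) (E : Set (EuclideanSpace ℝ (Fin n))) :
    perimeter (c • E) = ENNReal.ofReal (c ^ ((n : ℝ) - 1)) * perimeter E := by
  have hn : (0 : ℝ) ≤ (n : ℝ) - 1 := sub_nonneg.2 (mod_cast NeZero.one_le)
  rw [perimeter, perimeter, essBoundary_smul hc, Measure.hausdorffMeasure_smul₀ hn hc.ne',
    ENNReal.smul_def, smul_eq_mul, ENNReal.coe_rpow_of_nonneg _ hn, ← ENNReal.ofReal_rpow_of_pos hc,
    ← enorm_eq_nnnorm, Real.enorm_of_nonneg hc.le]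

end Scaling

section UnionDiff

variable {n : ℕ} {F D : Set (EuclideanSpace ℝ (Fin n))} {x : EuclideanSpace ℝ (Fin n)}

theorem hasDensity_one_of_mem_interior (hD : MeasurableSet D) (hx : x ∈ interior D) :
    HasDensity D x 1 :=
  hasDensity_univ.one_mono .univ hD <|
    (isOpen_interior.eventually_mem hx).mono fun _ hy _ => interior_subset hy

theorem eventually_notMem_of_notMem_closure (hx : x ∉ closure D) : ∀ᶠ y in 𝓝 x, y ∉ D :=
  (isClosed_closure.isOpen_compl.eventually_mem hx).mono fun _ => mt (subset_closure ·)

theorem essBoundary_union_subset (hF : MeasurableSet F) (hD : MeasurableSet D) :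
    essBoundary (F ∪ D) ⊆ (essBoundary F \ closure D) ∪ (frontier D \ {x | HasDensity F x 1}) := by
  rintro x ⟨h0, h1⟩
  by_cases hcl : x ∈ closure D
  · refine Or.inr ⟨⟨hcl, fun hint => h1 ?_⟩, fun hdens => h1 ?_⟩
    · exact (hasDensity_one_of_mem_interior hD hint).one_mono hD (hF.union hD)
        (.of_forall fun _ => Or.inr)
    · exact hdens.one_mono hF (hF.union hD) (.of_forall fun _ => Or.inl)
  · have hloc : ∀ᶠ y in 𝓝 x, y ∈ F ↔ y ∈ F ∪ D :=
      (eventually_notMem_of_notMem_closure hcl).mono fun y hy => (or_iff_left hy).symm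
    exact Or.inl ⟨⟨fun h => h0 (h.congr hloc), fun h => h1 (h.congr hloc)⟩, hcl⟩

theorem essBoundary_sdiff_subset (hF : MeasurableSet F) :
    essBoundary (D \ F) ⊆ (essBoundary F ∩ closure D) ∪ (frontier D \ {x | HasDensity F x 1}) := by
  rintro x ⟨h0, h1⟩
  have hcl : x ∈ closure D := by
    by_contra hcl
    exact h0 (hasDensity_empty.zero_mono
      ((eventually_notMem_of_notMem_closure hcl).mono fun y hy hyD => hy hyD.1))
  by_cases hint : x ∈ interior D
  · have hloc : ∀ᶠ y in 𝓝 x, y ∈ Fᶜ ↔ y ∈ D \ F :=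
      (isOpen_interior.eventually_mem hint).mono
        fun y hy => (and_iff_right (interior_subset hy)).symm
    refine Or.inl ⟨?_, hcl⟩
    rw [← essBoundary_compl hF]
    exact ⟨fun h => h0 (h.congr hloc), fun h => h1 (h.congr hloc)⟩
  · refine Or.inr ⟨⟨hcl, hint⟩, fun hdens => h0 ?_⟩
    exact ((hasDensity_one_iff hF).1 hdens).zero_mono (.of_forall fun y hy => hy.2)

/- If adding `D` does not lower the perimeter of `F`, then the part of the essential boundary
of `F` swallowed by `D` is paid for by the part of `frontier D` that is newly exposed. -/
theorem perimeter_sdiff_le (hF : MeasurableSet F) (hD : MeasurableSet D)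
    (hP : perimeter F ≠ ∞) (hle : perimeter F ≤ perimeter (F ∪ D)) :
    perimeter (D \ F) ≤ 2 * μH[(n : ℝ) - 1] (frontier D \ {x | HasDensity F x 1}) := by
  set a := μH[(n : ℝ) - 1] (frontier D \ {x | HasDensity F x 1})
  have hout : μH[(n : ℝ) - 1] (essBoundary F \ closure D) ≠ ∞ :=
    measure_ne_top_of_subset Set.sdiff_subset hP
  have hswallowed : μH[(n : ℝ) - 1] (essBoundary F ∩ closure D) ≤ a := by
    refine (ENNReal.add_le_add_iff_right hout).1 ?_
    calc μH[(n : ℝ) - 1] (essBoundary F ∩ closure D) + μH[(n : ℝ) - 1] (essBoundary F \ closure D)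
        = perimeter F := measure_inter_add_sdiff _ isClosed_closure.measurableSet
      _ ≤ perimeter (F ∪ D) := hle
      _ ≤ μH[(n : ℝ) - 1] (essBoundary F \ closure D) + a :=
        (measure_mono (essBoundary_union_subset hF hD)).trans (measure_union_le _ _)
      _ = a + μH[(n : ℝ) - 1] (essBoundary F \ closure D) := add_comm _ _
  calc perimeter (D \ F) ≤ μH[(n : ℝ) - 1] (essBoundary F ∩ closure D) + a :=
        (measure_mono (essBoundary_sdiff_subset hF)).trans (measure_union_le _ _)
    _ ≤ 2 * a := by rw [two_mul]; gcongr

end UnionDiff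

/-! ### Sets of reals that are `Fσ` together with their complement -/

section Line

theorem nonempty_inter_frontier_of_isPreconnected {X : Type*} [TopologicalSpace X] {t s : Set X}
    (ht : IsPreconnected t) (h1 : (t ∩ s).Nonempty) (h2 : (t \ s).Nonempty) :
    (t ∩ frontier s).Nonempty := by
  by_contra hne
  rw [Set.not_nonempty_iff_eq_empty] at hne
  have hcover : t ⊆ interior s ∪ (closure s)ᶜ := fun x hx => by
    by_contra hx'
    rw [Set.mem_union, not_or, Set.notMem_compl_iff] at hx'
    exact (hne ▸ ⟨hx, hx'.2, hx'.1⟩ : x ∈ (∅ : Set X))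
  obtain ⟨x, hxt, hxs⟩ := h1
  obtain ⟨y, hyt, hys⟩ := h2
  refine hys (interior_subset (ht.subset_left_of_subset_union isOpen_interior
    isClosed_closure.isOpen_compl ?_ hcover ⟨x, hxt, ?_⟩ hyt))
  · exact Set.disjoint_compl_right_iff_subset.2 (interior_subset.trans subset_closure)
  · exact (hcover hxt).resolve_right fun h => h (subset_closure hxs)

theorem exists_eventually_notMem_nhdsGT {α : Type*} [ConditionallyCompleteLinearOrder α]
    [DenselyOrdered α] [TopologicalSpace α] [OrderTopology α] {C : Set α} {d y : α}
    (hdy : d < y) (hd : d ∈ frontier C) (hy : y ∉ C) (hC : frontier C ∩ Set.Icc d y ⊆ C) :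
    ∃ t ∈ C, ∀ᶠ u in 𝓝[>] t, u ∉ C := by
  obtain ⟨e, he, hmax⟩ := (isCompact_Icc.inter_left isClosed_frontier).exists_isGreatest
    ⟨d, hd, le_rfl, hdy.le⟩
  have hey : e < y := he.2.2.lt_of_ne fun h => hy (h ▸ hC he)
  refine ⟨e, hC he, ?_⟩
  filter_upwards [Ioo_mem_nhdsGT hey] with u hu huC
  obtain ⟨t, ht, htf⟩ := nonempty_inter_frontier_of_isPreconnected
    (isPreconnected_Ioc (a := e) (b := y)) ⟨u, ⟨hu.1, hu.2.le⟩, huC⟩ ⟨y, ⟨hey, le_rfl⟩, hy⟩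
  exact (hmax ⟨htf, he.2.1.trans ht.1.le, ht.2⟩).not_gt ht.1

theorem exists_eventually_notMem_of_frontier_inter_ball_subset {C : Set ℝ} {d ε : ℝ} (hε : 0 < ε)
    (hd : d ∈ frontier C) (hC : frontier C ∩ ball d ε ⊆ C) :
    ∃ t ∈ C, (∀ᶠ u in 𝓝[>] t, u ∉ C) ∨ ∀ᶠ u in 𝓝[<] t, u ∉ C := by
  have hdC : d ∈ C := hC ⟨hd, mem_ball_self hε⟩
  obtain ⟨y, hyC, hyd⟩ := Metric.mem_closure_iff.1
    (frontier_eq_closure_inter_closure.subset hd).2 ε hε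
  have hyb : y ∈ ball d ε := mem_ball'.2 hyd
  have hord : (ball d ε).OrdConnected := by rw [Real.ball_eq_Ioo]; exact Set.ordConnected_Ioo
  rcases lt_trichotomy d y with hlt | rfl | hlt
  · obtain ⟨t, htC, ht⟩ := exists_eventually_notMem_nhdsGT hlt hd hyC
      ((Set.inter_subset_inter_right _ (hord.out (mem_ball_self hε) hyb)).trans hC)
    exact ⟨t, htC, .inl ht⟩
  · exact absurd hdC hyC
  · obtain ⟨t, htC, ht⟩ := exists_eventually_notMem_nhdsGT (α := ℝᵒᵈ)
      (C := OrderDual.ofDual ⁻¹' C) (d := OrderDual.toDual d) (y := OrderDual.toDual y) hlt hd hyC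
      (fun x hx => hC ⟨hx.1, hord.out hyb (mem_ball_self hε) ⟨hx.2.2, hx.2.1⟩⟩)
    exact ⟨t, htC, .inr ht⟩

theorem exists_inter_ball_subset_of_isClosed {X ι : Type*} [MetricSpace X] [CompleteSpace X]
    [Countable ι] {S : Set X} (hS : IsClosed S) (hne : S.Nonempty) {Z : ι → Set X}
    (hZ : ∀ i, IsClosed (Z i)) (hSZ : S ⊆ ⋃ i, Z i) :
    ∃ i, ∃ d ∈ S, ∃ ε > 0, S ∩ ball d ε ⊆ Z i := by
  have : Nonempty S := hne.to_subtype
  have : CompleteSpace S := hS.completeSpace_coe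
  obtain ⟨i, d, hd⟩ := nonempty_interior_of_iUnion_of_closed
    (f := fun i => (Subtype.val : S → X) ⁻¹' Z i)
    (fun i => (hZ i).preimage continuous_subtype_val)
    (by rw [← Set.preimage_iUnion]; exact Set.eq_univ_of_forall fun x => hSZ x.2)
  obtain ⟨ε, hε, hball⟩ := Metric.mem_nhds_iff.1 (mem_interior_iff_mem_nhds.1 hd)
  exact ⟨i, d, d.2, ε, hε, fun x hx => hball (show (⟨x, hx.1⟩ : S) ∈ ball d ε from hx.2)⟩

theorem eq_empty_or_univ_of_frequently_mem {C : Set ℝ} {A B : ℕ → Set ℝ}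
    (hA : ∀ j, IsClosed (A j)) (hB : ∀ j, IsClosed (B j))
    (hCA : C = ⋃ j, A j) (hCB : Cᶜ = ⋃ j, B j)
    (hC : ∀ t ∈ C, (∃ᶠ u in 𝓝[>] t, u ∈ C) ∧ ∃ᶠ u in 𝓝[<] t, u ∈ C)
    (hC' : ∀ t ∈ Cᶜ, (∃ᶠ u in 𝓝[>] t, u ∈ Cᶜ) ∧ ∃ᶠ u in 𝓝[<] t, u ∈ Cᶜ) :
    C = ∅ ∨ C = Set.univ := by
  rw [← isClopen_iff, isClopen_iff_frontier_eq_empty]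
  by_contra hne
  have hno : ∀ {D : Set ℝ} {d ε : ℝ},
      (∀ t ∈ D, (∃ᶠ u in 𝓝[>] t, u ∈ D) ∧ ∃ᶠ u in 𝓝[<] t, u ∈ D) → 0 < ε →
        d ∈ frontier D → ¬ frontier D ∩ ball d ε ⊆ D := fun hD hε hd hsub => by
    obtain ⟨t, ht, h | h⟩ := exists_eventually_notMem_of_frontier_inter_ball_subset hε hd hsub
    exacts [(hD t ht).1 h, (hD t ht).2 h]
  obtain ⟨i, d, hd, ε, hε, hsub⟩ := exists_inter_ball_subset_of_isClosed (Z := Sum.elim A B)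
    isClosed_frontier (Set.nonempty_iff_ne_empty.2 hne) (Sum.rec hA hB) (fun t _ => by
      rw [Set.iUnion_sumElim, ← hCA, ← hCB, Set.union_compl_self]; trivial)
  rcases i with j | j
  · exact hno hC hε hd (hsub.trans (hCA ▸ Set.subset_iUnion A j))
  · rw [← frontier_compl] at hd hsub
    exact hno hC' hε hd (hsub.trans (hCB ▸ Set.subset_iUnion B j))

end Line

/-! ### Measures of small balls -/

section Balls

theorem measure_eq_zero_of_frequently_inter_closedBall_le {X : Type*} [MetricSpace X]
    [SecondCountableTopology X] [HasBesicovitchCovering X] [MeasurableSpace X] [BorelSpace X]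
    (μ : Measure X) [IsLocallyFiniteMeasure μ] {S : Set X} {c : ℝ≥0∞} (hc : c < 1)
    (hS : ∀ z ∈ S, ∃ᶠ r in 𝓝[>] 0, μ (S ∩ closedBall z r) ≤ c * μ (closedBall z r)) :
    μ S = 0 := by
  have hfalse : ∀ᵐ z ∂μ.restrict S, z ∉ S := by
    filter_upwards [Besicovitch.ae_tendsto_measure_inter_div μ S] with z hz hzS
    obtain ⟨r, hr, hr'⟩ := ((hS z hzS).and_eventually (hz.eventually_const_lt hc)).exists
    exact hr.not_gt (ENNReal.mul_lt_of_lt_div hr')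
  have := measure_eq_zero_iff_ae_notMem.2 hfalse
  rwa [Measure.restrict_apply_self] at this

theorem isOpen_setOf_lt_measure_inter_ball {X : Type*} [PseudoMetricSpace X] [MeasurableSpace X]
    (μ : Measure X) (G : Set X) (r : ℝ) (c : ℝ≥0∞) : IsOpen {x | c < μ (G ∩ ball x r)} := by
  refine Metric.isOpen_iff.2 fun x (hx : c < μ (G ∩ ball x r)) => ?_
  have hmono : Monotone fun m : ℕ => G ∩ ball x (r - 1 / ((m : ℝ) + 1)) := fun a b hab =>
    Set.inter_subset_inter_right _ (ball_subset_ball (sub_le_sub_left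
      (Nat.one_div_le_one_div hab) r))
  have hUnion : G ∩ ball x r = ⋃ m : ℕ, G ∩ ball x (r - 1 / ((m : ℝ) + 1)) := by
    refine (Set.iUnion_subset fun m => ?_).antisymm' fun y hy => ?_
    · exact Set.inter_subset_inter_right _ (ball_subset_ball (sub_le_self r (by positivity)))
    · obtain ⟨m, hm⟩ := exists_nat_one_div_lt (sub_pos.2 (mem_ball.1 hy.2))
      exact Set.mem_iUnion.2 ⟨m, hy.1, mem_ball.2 (by linarith)⟩
  rw [hUnion, hmono.measure_iUnion, lt_iSup_iff] at hx
  obtain ⟨m, hm⟩ := hx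
  refine ⟨1 / ((m : ℝ) + 1), Nat.one_div_pos_of_nat, fun y hy => ?_⟩
  refine hm.trans_le (measure_mono (Set.inter_subset_inter_right _ (ball_subset_ball' ?_)))
  linarith [mem_ball'.1 hy]

end Balls

/-! ### Thick points of a set in `ℝ × ℝᵏ` -/

section Thick

variable {k : ℕ} {G : Set (ℝ × (Fin k → ℝ))} {x : ℝ × (Fin k → ℝ)} {i j : ℕ}

/-- The points around which `G` fills most of every ball of radius `3 r`, `r < 1 / (j + 1)`: a
closed, quantitative substitute for the points of density one. The complement is compared with the
volume `r ^ (k + 1)` of a slab of height `r` over a cube of side `r`. -/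
def thick (G : Set (ℝ × (Fin k → ℝ))) (j : ℕ) : Set (ℝ × (Fin k → ℝ)) :=
  {x | ∀ r ∈ Set.Ioo (0 : ℝ) (1 / ((j : ℝ) + 1)),
    2 * volume (ball x (3 * r) \ G) ≤ ENNReal.ofReal (r ^ (k + 1))}

/-- The points that are thick for `G` at some scale. -/
def thickPart (G : Set (ℝ × (Fin k → ℝ))) : Set (ℝ × (Fin k → ℝ)) := ⋃ j, thick G j

theorem isClosed_thick (G : Set (ℝ × (Fin k → ℝ))) (j : ℕ) : IsClosed (thick G j) := by
  have hthick : thick G j = ⋂ r ∈ Set.Ioo (0 : ℝ) (1 / ((j : ℝ) + 1)),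
      {x | ENNReal.ofReal (r ^ (k + 1)) / 2 < volume (Gᶜ ∩ ball x (3 * r))}ᶜ := by
    ext x
    simp only [thick, Set.mem_iInter, Set.mem_ofPred_eq, Set.mem_compl_iff, not_lt]
    refine forall₂_congr fun r _ => ?_
    rw [ENNReal.le_div_iff_mul_le (by simp) (by simp), mul_comm, Set.inter_comm, Set.sdiff_eq]
  rw [hthick]
  exact isClosed_biInter fun r _ => (isOpen_setOf_lt_measure_inter_ball _ _ _ _).isClosed_compl

theorem volume_ball_prod_pi (x : ℝ × (Fin k → ℝ)) {r : ℝ} (hr : 0 < r) :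
    volume (ball x r) = ENNReal.ofReal ((2 * r) ^ (k + 1)) := by
  rw [← ball_prod_same, Measure.volume_eq_prod, Measure.prod_prod, Real.volume_ball,
    Real.volume_pi_ball x.2 hr, ← ENNReal.ofReal_mul (by positivity), Fintype.card_fin, pow_succ']

theorem disjoint_thick (hG : MeasurableSet G) : Disjoint (thick G i) (thick Gᶜ j) := by
  refine Set.disjoint_left.2 fun x hi hj => ?_
  obtain ⟨r, hr, hr'⟩ := exists_between
    (lt_min (Nat.one_div_pos_of_nat (α := ℝ) (n := i)) (Nat.one_div_pos_of_nat (α := ℝ) (n := j)))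
  have hout := hi r ⟨hr, hr'.trans_le (min_le_left _ _)⟩
  have hin := hj r ⟨hr, hr'.trans_le (min_le_right _ _)⟩
  have hball : 2 * ENNReal.ofReal ((2 * (3 * r)) ^ (k + 1)) ≤ 2 * ENNReal.ofReal (r ^ (k + 1)) := by
    rw [← volume_ball_prod_pi x (by positivity), ← measure_inter_add_sdiff (ball x (3 * r)) hG,
      mul_add, two_mul (ENNReal.ofReal _)]
    rw [Set.sdiff_compl] at hin
    exact add_le_add hin hout
  rw [ENNReal.mul_le_mul_iff_right (by simp) (by simp),
    ENNReal.ofReal_le_ofReal_iff (by positivity)] at hball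
  exact hball.not_gt (pow_lt_pow_left₀ (by linarith) hr.le (by simp))

theorem disjoint_thickPart (hG : MeasurableSet G) : Disjoint (thickPart G) (thickPart Gᶜ) :=
  Set.disjoint_iUnion_left.2 fun _ => Set.disjoint_iUnion_right.2 fun _ => disjoint_thick hG

end Thick

section Coordinates

variable {k : ℕ}

/-- The splitting `ℝᵏ⁺¹ ≃ ℝ × ℝᵏ` that singles out the `i`-th coordinate. -/
def splitCoord (i : Fin (k + 1)) : EuclideanSpace ℝ (Fin (k + 1)) ≃ᵐ ℝ × (Fin k → ℝ) :=
  (MeasurableEquiv.toLp 2 (Fin (k + 1) → ℝ)).symm.trans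
    (MeasurableEquiv.piFinSuccAbove (fun _ => ℝ) i)

theorem splitCoord_apply (i : Fin (k + 1)) (x : EuclideanSpace ℝ (Fin (k + 1))) :
    splitCoord i x = (x i, fun j => x (i.succAbove j)) := rfl

theorem measurePreserving_splitCoord (i : Fin (k + 1)) :
    MeasurePreserving (splitCoord i) volume volume :=
  (volume_preserving_piFinSuccAbove (fun _ => ℝ) i).comp
    (PiLp.volume_preserving_ofLp (Fin (k + 1)))

theorem exists_antilipschitzWith_splitCoord (i : Fin (k + 1)) :
    ∃ K, 0 < K ∧ AntilipschitzWith K (splitCoord i) := by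
  have hanti := PiLp.antilipschitzWith_ofLp 2 (fun _ : Fin (k + 1) => ℝ)
  have hK : (0 : NNReal) < Fintype.card (Fin (k + 1)) := Nat.cast_pos.2 Fintype.card_pos
  refine ⟨_, NNReal.rpow_pos hK (p := _), AntilipschitzWith.of_le_mul_dist
    fun x y => (hanti.le_mul_dist x y).trans_eq (congrArg _ ?_)⟩
  have hdist : dist (WithLp.ofLp x) (WithLp.ofLp y) = dist (splitCoord i x) (splitCoord i y) := by
    rw [splitCoord_apply, splitCoord_apply, Prod.dist_eq,
      ← Fin.dist_insertNth_insertNth (α := fun _ => ℝ) (i := i)]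
    congr 1
    · exact (Fin.insertNth_self_removeNth i (WithLp.ofLp x)).symm
    · exact (Fin.insertNth_self_removeNth i (WithLp.ofLp y)).symm
  rw [hdist]

theorem HasDensity.eventually_volume_inter_ball_le {n : ℕ} [NeZero n]
    {E : Set (EuclideanSpace ℝ (Fin n))}
    {x : EuclideanSpace ℝ (Fin n)} (h : HasDensity E x 0) {c : ℝ} (hc : 0 < c) :
    ∀ᶠ r : ℝ in 𝓝[>] 0, volume (E ∩ ball x r) ≤ ENNReal.ofReal (c * r ^ n) := by
  set ω := (volume (ball (0 : EuclideanSpace ℝ (Fin n)) 1)).toReal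
  have hω : 0 < ω := toReal_volume_ball_pos _ one_pos
  filter_upwards [h.eventually_lt_const (div_pos hc hω), self_mem_nhdsWithin] with r hr hr0
  have hball : (volume (ball x r)).toReal = r ^ n * ω := by
    rw [Measure.addHaar_ball volume x (le_of_lt hr0), ENNReal.toReal_mul,
      finrank_euclideanSpace_fin, ENNReal.toReal_ofReal (pow_nonneg (le_of_lt hr0) n)]
  rw [div_lt_iff₀ (toReal_volume_ball_pos x hr0), hball, mul_comm (r ^ n), ← mul_assoc,
    div_mul_cancel₀ _ hω.ne'] at hr
  exact (ENNReal.le_ofReal_iff_toReal_le (volume_inter_ball_ne_top _ _ _)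
    (mul_nonneg hc.le (pow_nonneg (le_of_lt hr0) n))).2 hr.le

theorem splitCoord_mem_thickPart (i : Fin (k + 1)) {E : Set (EuclideanSpace ℝ (Fin (k + 1)))}
    (hE : MeasurableSet E) {x : EuclideanSpace ℝ (Fin (k + 1))} (hx : HasDensity E x 1) :
    splitCoord i x ∈ thickPart ((splitCoord i).symm ⁻¹' E) := by
  obtain ⟨K, hK, hanti⟩ := exists_antilipschitzWith_splitCoord i
  have hc : 0 < 1 / (2 * (3 * (K : ℝ)) ^ (k + 1)) := by positivity
  obtain ⟨ε, hε, hsmall⟩ := mem_nhdsGT_iff_exists_Ioo_subset.1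
    (((hasDensity_one_iff hE).1 hx).eventually_volume_inter_ball_le hc)
  obtain ⟨j, hj⟩ := exists_nat_one_div_lt (show 0 < ε / (3 * K) from div_pos hε (by positivity))
  refine Set.mem_iUnion.2 ⟨j, fun r hr => ?_⟩
  have hrε : 3 * K * r < ε := by
    have := (lt_div_iff₀ (by positivity)).1 (hr.2.trans hj)
    linarith
  have hsub : splitCoord i ⁻¹' (ball (splitCoord i x) (3 * r) \ (splitCoord i).symm ⁻¹' E) ⊆
      Eᶜ ∩ ball x (3 * K * r) := fun y hy => by
    refine ⟨by simpa using hy.2, mem_ball.2 ?_⟩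
    calc dist y x ≤ K * dist (splitCoord i y) (splitCoord i x) := hanti.le_mul_dist y x
      _ < K * (3 * r) := by have : dist _ _ < 3 * r := hy.1; gcongr
      _ = 3 * K * r := by ring
  calc 2 * volume (ball (splitCoord i x) (3 * r) \ (splitCoord i).symm ⁻¹' E)
      ≤ 2 * volume (Eᶜ ∩ ball x (3 * K * r)) := by
        rw [← (measurePreserving_splitCoord i).measure_preimage_equiv]
        gcongr
    _ ≤ 2 * ENNReal.ofReal (1 / (2 * (3 * (K : ℝ)) ^ (k + 1)) * (3 * K * r) ^ (k + 1)) := by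
        gcongr
        exact hsmall ⟨mul_pos (by positivity) hr.1, hrε⟩
    _ = ENNReal.ofReal (r ^ (k + 1)) := by
        rw [← ENNReal.ofReal_ofNat 2, ← ENNReal.ofReal_mul zero_le_two]
        congr 1
        field_simp
        ring

theorem ae_mem_thickPart {G : Set (ℝ × (Fin k → ℝ))} (hG : MeasurableSet G) :
    ∀ᵐ x, x ∈ G → x ∈ thickPart G := by
  have hpre : (splitCoord 0).symm ⁻¹' (splitCoord 0 ⁻¹' G) = G :=
    (splitCoord 0).symm_preimage_preimage G
  filter_upwards [(measurePreserving_splitCoord (0 : Fin (k + 1))).symm.quasiMeasurePreserving.ae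
    (ae_hasDensity_one ((splitCoord 0).measurable hG))] with x hx hxG
  have hthick := splitCoord_mem_thickPart 0 ((splitCoord 0).measurable hG)
    (hx (by simpa using hxG))
  rwa [hpre, MeasurableEquiv.apply_symm_apply] at hthick

end Coordinates

section OneSided

variable {k : ℕ} {G : Set (ℝ × (Fin k → ℝ))}

theorem volume_inter_thickPart_compl (hG : MeasurableSet G) :
    volume (G ∩ thickPart Gᶜ) = 0 := by
  rw [measure_eq_zero_iff_ae_notMem]
  filter_upwards [ae_mem_thickPart hG] with x hx hxG
  exact Set.disjoint_left.1 (disjoint_thickPart hG) (hx hxG.1) hxG.2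

/-- The base points `z` of vertical lines which leave a point of `thick G j` of height in
`[a, a + s / 2]` upwards through a segment of length `s` in `thickPart Gᶜ`. -/
def exitSet (G : Set (ℝ × (Fin k → ℝ))) (j : ℕ) (a s : ℝ) : Set (Fin k → ℝ) :=
  {z | ∃ t ∈ Set.Icc a (a + s / 2), (t, z) ∈ thick G j ∧
    ∀ u ∈ Set.Ioo t (t + s), (u, z) ∈ thickPart Gᶜ}

/- Over a small ball, all the exit points lie (up to `r`) below a highest one `(t, z)`, so the slab
of heights `(t + r, t + 2 * r)` consists of points of `thickPart Gᶜ`: almost none of them is in `G`,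
although they are close to the thick point `(t, z)`. -/
theorem volume_exitSet_inter_closedBall_le (hG : MeasurableSet G) {j : ℕ} {a s r : ℝ} (hr : 0 < r)
    (hrs : r < s / 4) (hrj : r < 1 / ((j : ℝ) + 1)) (z₀ : Fin k → ℝ) :
    2 * volume (exitSet G j a s ∩ closedBall z₀ r) ≤ ENNReal.ofReal (r ^ k) := by
  set S := exitSet G j a s ∩ closedBall z₀ r
  set T := {t ∈ Set.Icc a (a + s / 2) | ∃ z ∈ S, (t, z) ∈ thick G j ∧
    ∀ u ∈ Set.Ioo t (t + s), (u, z) ∈ thickPart Gᶜ}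
  rcases S.eq_empty_or_nonempty with hS | ⟨z, hz⟩
  · simp [hS]
  have hT : T.Nonempty := let ⟨t, ht, htz⟩ := hz.1; ⟨t, ht, z, hz, htz⟩
  have hTb : BddAbove T := ⟨a + s / 2, fun t ht => ht.1.2⟩
  obtain ⟨t, ⟨hta, z, hz, htz, -⟩, htop⟩ := exists_lt_of_lt_csSup hT (sub_lt_self (sSup T) hr)
  have hslab : Set.Ioo (t + r) (t + 2 * r) ×ˢ S ⊆
      (ball (t, z) (3 * r) \ G) ∪ (G ∩ thickPart Gᶜ) := by
    rintro ⟨v, z'⟩ ⟨⟨hv, hv'⟩, hz'⟩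
    obtain ⟨t', ht'a, ht'⟩ := hz'.1
    have ht't : t' ≤ sSup T := le_csSup hTb ⟨ht'a, z', hz', ht'⟩
    have hthin : (v, z') ∈ thickPart Gᶜ :=
      ht'.2 v ⟨by linarith, by linarith [hta.2, ht'a.1]⟩
    by_cases hvG : (v, z') ∈ G
    · exact Or.inr ⟨hvG, hthin⟩
    · refine Or.inl ⟨mem_ball.2 (max_lt ?_ ?_), hvG⟩
      · rw [Real.dist_eq, abs_lt]
        constructor <;> linarith
      · linarith [dist_triangle_right z' z z₀, mem_closedBall.1 hz'.2, mem_closedBall.1 hz.2]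
  have hvol : ENNReal.ofReal r * volume S ≤ volume (ball (t, z) (3 * r) \ G) :=
    calc ENNReal.ofReal r * volume S = volume (Set.Ioo (t + r) (t + 2 * r) ×ˢ S) := by
          rw [Measure.volume_eq_prod, Measure.prod_prod, Real.volume_Ioo]
          ring_nf
      _ ≤ volume (ball (t, z) (3 * r) \ G) + volume (G ∩ thickPart Gᶜ) :=
          (measure_mono hslab).trans (measure_union_le _ _)
      _ = volume (ball (t, z) (3 * r) \ G) := by rw [volume_inter_thickPart_compl hG, add_zero]
  refine (ENNReal.mul_le_mul_iff_right (ENNReal.ofReal_pos.2 hr).ne' ENNReal.ofReal_ne_top).1 ?_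
  rw [← ENNReal.ofReal_mul hr.le, ← pow_succ', mul_left_comm]
  exact (mul_le_mul_right hvol 2).trans (htz r ⟨hr, hrj⟩)

theorem volume_exitSet (hG : MeasurableSet G) (j : ℕ) (a : ℝ) {s : ℝ} (hs : 0 < s) :
    volume (exitSet G j a s) = 0 := by
  refine measure_eq_zero_of_frequently_inter_closedBall_le volume
    (ENNReal.inv_lt_one.2 one_lt_two) fun z _ => Eventually.frequently ?_
  filter_upwards [Ioo_mem_nhdsGT (show 0 < min (s / 4) (1 / ((j : ℝ) + 1)) by positivity)] with r hr
  rw [← ENNReal.mul_le_iff_le_inv two_ne_zero ENNReal.ofNat_ne_top,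
    Real.volume_pi_closedBall z hr.1.le, Fintype.card_fin]
  refine (volume_exitSet_inter_closedBall_le hG hr.1 (hr.2.trans_le (min_le_left _ _))
    (hr.2.trans_le (min_le_right _ _)) z).trans (ENNReal.ofReal_le_ofReal ?_)
  exact pow_le_pow_left₀ hr.1.le (by linarith [hr.1]) k

theorem ae_frequently_nhdsGT_notMem_thickPart_compl (hG : MeasurableSet G) :
    ∀ᵐ z, ∀ t, (t, z) ∈ thickPart G → ∃ᶠ u in 𝓝[>] t, (u, z) ∉ thickPart Gᶜ := by
  have hnull : ∀ᵐ z, ∀ (j l : ℕ) (q : ℤ),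
      z ∉ exitSet G j (q * (1 / ((l : ℝ) + 1) / 2)) (1 / ((l : ℝ) + 1)) := by
    refine ae_all_iff.2 fun j => ae_all_iff.2 fun l => ae_all_iff.2 fun q => ?_
    exact measure_eq_zero_iff_ae_notMem.1 (volume_exitSet hG j _ Nat.one_div_pos_of_nat)
  filter_upwards [hnull] with z hz t ht hev
  obtain ⟨j, hj⟩ := Set.mem_iUnion.1 ht
  obtain ⟨b, hb, hsub⟩ := mem_nhdsGT_iff_exists_Ioo_subset.1 hev
  obtain ⟨l, hl⟩ := exists_nat_one_div_lt (sub_pos.2 (Set.mem_Ioi.1 hb))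
  have hs : 0 < 1 / ((l : ℝ) + 1) / 2 := by positivity
  refine hz j l ⌊t / (1 / ((l : ℝ) + 1) / 2)⌋ ⟨t, ⟨?_, ?_⟩, hj, fun u hu => ?_⟩
  · exact (le_div_iff₀ hs).1 (Int.floor_le _)
  · rw [← add_one_mul]
    exact ((div_lt_iff₀ hs).1 (Int.lt_floor_add_one _)).le
  · exact not_not.1 (hsub ⟨hu.1, by linarith [hu.2]⟩)

theorem thick_preimage_neg (hG : MeasurableSet G) (j : ℕ) :
    thick (Prod.map Neg.neg id ⁻¹' G) j = Prod.map Neg.neg id ⁻¹' thick G j := by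
  have hmp : MeasurePreserving (Prod.map Neg.neg id : ℝ × (Fin k → ℝ) → ℝ × (Fin k → ℝ)) :=
    (Measure.measurePreserving_neg volume).prod (.id volume)
  ext x
  refine forall₂_congr fun r _ => ?_
  have hball : ball x (3 * r) = Prod.map Neg.neg id ⁻¹' ball (Prod.map Neg.neg id x) (3 * r) := by
    ext y
    simp [Prod.dist_eq, dist_neg_neg]
  rw [hball, ← Set.preimage_sdiff,
    hmp.measure_preimage (measurableSet_ball.diff hG).nullMeasurableSet]

theorem ae_frequently_nhdsLT_notMem_thickPart_compl (hG : MeasurableSet G) :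
    ∀ᵐ z, ∀ t, (t, z) ∈ thickPart G → ∃ᶠ u in 𝓝[<] t, (u, z) ∉ thickPart Gᶜ := by
  have hrefl : Measurable (Prod.map Neg.neg id : ℝ × (Fin k → ℝ) → ℝ × (Fin k → ℝ)) :=
    measurable_neg.prodMap measurable_id
  filter_upwards [ae_frequently_nhdsGT_notMem_thickPart_compl (hrefl hG)] with z hz t ht
  simp only [thickPart, ← Set.preimage_compl, thick_preimage_neg hG, thick_preimage_neg hG.compl,
    ← Set.preimage_iUnion] at hz
  have hfreq := hz (-t) (by simpa [thickPart] using ht)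
  have hneg : Tendsto Neg.neg (𝓝[>] (-t)) (𝓝[<] t) := by simpa using tendsto_neg_nhdsGT (a := -t)
  exact hneg.frequently hfreq

end OneSided

/-! ### The isoperimetric inequality -/

section Projection

variable {k : ℕ}

theorem ae_ae_notMem_of_mem_thickPart_union {G : Set (ℝ × (Fin k → ℝ))} (hG : MeasurableSet G)
    (hfin : volume G ≠ ∞) :
    ∀ᵐ z : Fin k → ℝ, (∀ t, (t, z) ∈ thickPart G ∪ thickPart Gᶜ) → ∀ᵐ t : ℝ, (t, z) ∉ G := by
  have hswap {p : ℝ × (Fin k → ℝ) → Prop} (hp : ∀ᵐ x, p x) :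
      ∀ᵐ z : Fin k → ℝ, ∀ᵐ t : ℝ, p (t, z) :=
    Measure.ae_ae_of_ae_prod
      ((Measure.measurePreserving_swap (μ := volume) (ν := volume)).quasiMeasurePreserving.ae hp)
  have hslice : ∀ᵐ z : Fin k → ℝ, volume ((fun t : ℝ => (t, z)) ⁻¹' G) < ∞ :=
    ae_lt_top (measurable_measure_prodMk_right hG) (by rwa [← Measure.prod_apply_symm hG])
  have hGT' := ae_frequently_nhdsGT_notMem_thickPart_compl hG.compl
  have hLT' := ae_frequently_nhdsLT_notMem_thickPart_compl hG.compl
  simp only [compl_compl] at hGT' hLT'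
  filter_upwards [ae_frequently_nhdsGT_notMem_thickPart_compl hG, hGT',
    ae_frequently_nhdsLT_notMem_thickPart_compl hG, hLT', hslice, hswap (ae_mem_thickPart hG),
    hswap (ae_mem_thickPart hG.compl)] with z hGT hGT' hLT hLT' hlt hmem hmem' hcov
  have hcompl (t : ℝ) : (t, z) ∈ thickPart Gᶜ ↔ (t, z) ∉ thickPart G :=
    ⟨fun h h' => Set.disjoint_left.1 (disjoint_thickPart hG) h' h, (hcov t).resolve_left⟩
  have hclosed (E : Set (ℝ × (Fin k → ℝ))) (j : ℕ) : IsClosed {t | (t, z) ∈ thick E j} :=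
    (isClosed_thick E j).preimage (by fun_prop)
  have hCA : {t | (t, z) ∈ thickPart G} = ⋃ j, {t | (t, z) ∈ thick G j} := by
    ext t
    simp [thickPart]
  have hCB : {t | (t, z) ∈ thickPart G}ᶜ = ⋃ j, {t | (t, z) ∈ thick Gᶜ j} := by
    ext t
    simpa [thickPart] using (hcompl t).symm
  rcases eq_empty_or_univ_of_frequently_mem (hclosed G) (hclosed Gᶜ) hCA hCB
    (fun t ht => ⟨(hGT t ht).mono fun u hu => (hcov u).resolve_right hu,
      (hLT t ht).mono fun u hu => (hcov u).resolve_right hu⟩)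
    (fun t ht => ⟨hGT' t ((hcompl t).2 ht), hLT' t ((hcompl t).2 ht)⟩) with hempty | huniv
  · filter_upwards [hmem] with t ht hG'
    exact Set.eq_empty_iff_forall_notMem.1 hempty t (ht hG')
  · have hfull : volume ((fun t : ℝ => (t, z)) ⁻¹' G) = volume (Set.univ : Set ℝ) := by
      refine measure_congr (eventuallyEq_univ.2 ?_)
      filter_upwards [hmem'] with t ht
      by_contra hG'
      exact (hcompl t).1 (ht hG') (Set.eq_univ_iff_forall.1 huniv t)
    exact absurd hlt (by simp [hfull])

theorem volume_image_splitCoord_snd_le (i : Fin (k + 1))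
    (S : Set (EuclideanSpace ℝ (Fin (k + 1)))) :
    volume ((fun x => (splitCoord i x).2) '' S) ≤ μH[(k : ℝ)] S := by
  have hlip : LipschitzWith 1 fun x => (splitCoord i x).2 := by
    refine LipschitzWith.of_dist_le_mul fun x y => ?_
    rw [NNReal.coe_one, one_mul]
    refine ((dist_pi_le_iff dist_nonneg).2 fun j =>
      dist_le_pi_dist (WithLp.ofLp x) (WithLp.ofLp y) (i.succAbove j)).trans ?_
    simpa using (PiLp.lipschitzWith_ofLp 2 (fun _ : Fin (k + 1) => ℝ)).dist_le_mul x y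
  have hvol : (μH[(k : ℝ)] : Measure (Fin k → ℝ)) = volume := by
    simpa using hausdorffMeasure_pi_real (ι := Fin k)
  simpa [hvol] using hlip.hausdorffMeasure_image_le (Nat.cast_nonneg k) S

theorem ae_splitCoord_snd_mem {G : Set (EuclideanSpace ℝ (Fin (k + 1)))} (hG : MeasurableSet G)
    (hfin : volume G ≠ ∞) (i : Fin (k + 1)) {T : Set (Fin k → ℝ)} (hT : MeasurableSet T)
    (hGT : (fun x => (splitCoord i x).2) '' essBoundary G ⊆ T) :
    ∀ᵐ x, x ∈ G → (splitCoord i x).2 ∈ T := by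
  have hG' : MeasurableSet ((splitCoord i).symm ⁻¹' G) := (splitCoord i).symm.measurable hG
  have hcov (z) (hz : z ∉ T) (t : ℝ) : (t, z) ∈ thickPart ((splitCoord i).symm ⁻¹' G) ∪
      thickPart ((splitCoord i).symm ⁻¹' G)ᶜ := by
    obtain ⟨x, hx⟩ := (splitCoord i).surjective (t, z)
    have hxG : x ∉ essBoundary G := fun h => hz (hGT ⟨x, h, congrArg Prod.snd hx⟩)
    rw [← hx]
    by_cases h : HasDensity G x 1
    · exact Or.inl (splitCoord_mem_thickPart i hG h)
    · have h0 : HasDensity G x 0 := by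
        by_contra h0
        exact hxG ⟨h0, h⟩
      exact Or.inr (splitCoord_mem_thickPart i hG.compl ((hasDensity_zero_iff hG).1 h0))
  have hslice : ∀ᵐ z, ∀ᵐ t : ℝ, z ∉ T → (t, z) ∉ (splitCoord i).symm ⁻¹' G := by
    filter_upwards [ae_ae_notMem_of_mem_thickPart_union hG'
      (by rwa [(measurePreserving_splitCoord i).symm.measure_preimage_equiv])] with z hz
    by_cases hzT : z ∈ T
    · exact Eventually.of_forall fun t h => absurd hzT h
    · filter_upwards [hz (hcov z hzT)] with t ht _ using ht
  have hprod : ∀ᵐ q : (Fin k → ℝ) × ℝ, q.1 ∉ T → (q.2, q.1) ∉ (splitCoord i).symm ⁻¹' G :=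
    (Measure.ae_prod_iff_ae_ae ((measurable_fst hT).compl.imp (measurable_swap hG').compl)).2 hslice
  filter_upwards [(measurePreserving_splitCoord i).quasiMeasurePreserving.ae
    ((Measure.measurePreserving_swap (μ := volume) (ν := volume)).quasiMeasurePreserving.ae
      hprod)] with x hx hxG
  by_contra hxT
  exact hx hxT (by simpa using hxG)

end Projection

section Isoperimetric

variable {k : ℕ}

theorem one_le_lintegral_indicator_preimage_piFinSuccAbove (i : Fin (k + 1))
    {T : Set (Fin k → ℝ)} {x : Fin (k + 1) → ℝ} (hx : (fun j => x (i.succAbove j)) ∈ T) :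
    1 ≤ ∫⁻ t, (MeasurableEquiv.piFinSuccAbove (fun _ => ℝ) i ⁻¹'
      (Set.Icc (0 : ℝ) 1 ×ˢ T)).indicator (1 : (Fin (k + 1) → ℝ) → ℝ≥0∞)
        (Function.update x i t) := by
  have hmem (t : ℝ) (ht : t ∈ Set.Icc (0 : ℝ) 1) : Function.update x i t ∈
      MeasurableEquiv.piFinSuccAbove (fun _ => ℝ) i ⁻¹' (Set.Icc (0 : ℝ) 1 ×ˢ T) := by
    change (Function.update x i t i, i.removeNth (Function.update x i t)) ∈ _ ×ˢ T
    rw [Function.update_self, Fin.removeNth_update]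
    exact ⟨ht, hx⟩
  calc (1 : ℝ≥0∞) = ∫⁻ t : ℝ, (Set.Icc (0 : ℝ) 1).indicator 1 t := by
        rw [lintegral_indicator_one measurableSet_Icc, Real.volume_Icc, sub_zero,
          ENNReal.ofReal_one]
    _ ≤ _ := lintegral_mono fun t => Set.indicator_apply_le'
        (fun ht => by rw [Set.indicator_of_mem (hmem t ht)]; exact le_rfl) fun _ => zero_le

/- Loomis–Whitney: Mathlib's grid-lines lemma is applied to the sum of the indicator functions of
the cylinders of height one over the sets `T i`. -/
theorem volume_le_sum_volume_rpow (hk : k ≠ 0) {G : Set (Fin (k + 1) → ℝ)} (hG : MeasurableSet G)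
    {T : Fin (k + 1) → Set (Fin k → ℝ)} (hT : ∀ i, MeasurableSet (T i))
    (hGT : ∀ i, ∀ᵐ x, x ∈ G → (fun j => x (i.succAbove j)) ∈ T i) :
    volume G ≤ (∑ i, volume (T i)) ^ (((k : ℝ) + 1) / k) := by
  let S (i : Fin (k + 1)) : Set (Fin (k + 1) → ℝ) :=
    MeasurableEquiv.piFinSuccAbove (fun _ => ℝ) i ⁻¹' (Set.Icc (0 : ℝ) 1 ×ˢ T i)
  have hS (i) : MeasurableSet (S i) :=
    (MeasurableEquiv.piFinSuccAbove (fun _ => ℝ) i).measurable (measurableSet_Icc.prod (hT i))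
  have hSvol (i) : volume (S i) = volume (T i) := by
    rw [(volume_preserving_piFinSuccAbove (fun _ => ℝ) i).measure_preimage_equiv,
      Measure.volume_eq_prod, Measure.prod_prod]
    simp
  let f (x : Fin (k + 1) → ℝ) : ℝ≥0∞ := ∑ j, (S j).indicator 1 x
  have hone (x : Fin (k + 1) → ℝ) (hx : ∀ i, (fun j => x (i.succAbove j)) ∈ T i) (i) :
      1 ≤ ∫⁻ t, f (Function.update x i t) := by
    exact (one_le_lintegral_indicator_preimage_piFinSuccAbove i (hx i)).trans
      (lintegral_mono fun t => Finset.single_le_sum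
        (f := fun j => (S j).indicator (1 : (Fin (k + 1) → ℝ) → ℝ≥0∞) (Function.update x i t))
        (fun _ _ => zero_le) (Finset.mem_univ i))
  have hconj : Real.HolderConjugate (Fintype.card (Fin (k + 1))) (((k : ℝ) + 1) / k) := by
    rw [Real.holderConjugate_iff, Fintype.card_fin]
    refine ⟨by exact_mod_cast Nat.lt_add_of_pos_left (Nat.pos_of_ne_zero hk), ?_⟩
    push_cast
    field_simp
    ring
  calc volume G = ∫⁻ x, G.indicator 1 x := (lintegral_indicator_one hG).symm
    _ ≤ ∫⁻ x, ∏ i, (∫⁻ t, f (Function.update x i t)) ^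
          ((1 : ℝ) / (Fintype.card (Fin (k + 1)) - 1 : ℝ)) := by
        refine lintegral_mono_ae ?_
        filter_upwards [ae_all_iff.2 hGT] with x hx
        refine Set.indicator_apply_le' (fun hxG => ?_) fun _ => zero_le
        exact Finset.one_le_prod' fun i _ => ENNReal.one_le_rpow (hone x (fun i => hx i hxG) i)
            (by simpa [Nat.pos_iff_ne_zero] using hk)
    _ ≤ (∫⁻ x, f x) ^ (((k : ℝ) + 1) / k) :=
        lintegral_prod_lintegral_pow_le _ hconj
          (Finset.measurable_sum _ fun i _ => measurable_one.indicator (hS i))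
    _ = (∑ i, volume (T i)) ^ (((k : ℝ) + 1) / k) := by
        rw [lintegral_finsetSum _ fun i _ => measurable_one.indicator (hS i)]
        simp_rw [lintegral_indicator_one (hS _), hSvol]

theorem one_le_perimeter {G : Set (EuclideanSpace ℝ (Fin 1))} (hG : MeasurableSet G)
    (hfin : volume G ≠ ∞) (h0 : volume G ≠ 0) : 1 ≤ perimeter G := by
  have hne : (essBoundary G).Nonempty := by
    by_contra hempty
    refine h0 (measure_eq_zero_iff_ae_notMem.2 ?_)
    simpa [Set.not_nonempty_iff_eq_empty.1 hempty] using
      ae_splitCoord_snd_mem hG hfin 0 (T := ∅) .empty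
  have himage : (fun x => (splitCoord 0 x).2) '' essBoundary G = Set.univ :=
    Subsingleton.eq_univ_of_nonempty (hne.image _)
  calc (1 : ℝ≥0∞) = volume ((fun x => (splitCoord 0 x).2) '' essBoundary G) := by
        rw [himage, Measure.volume_pi_eq_dirac (x := fun j => Fin.elim0 j), measure_univ]
    _ ≤ perimeter G := by simpa [perimeter] using volume_image_splitCoord_snd_le 0 (essBoundary G)

theorem volume_rpow_le_mul_perimeter {n : ℕ} [NeZero n] {G : Set (EuclideanSpace ℝ (Fin n))}
    (hG : MeasurableSet G) (hfin : volume G ≠ ∞) (h0 : volume G ≠ 0) :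
    volume G ^ (((n : ℝ) - 1) / n) ≤ n * perimeter G := by
  obtain ⟨k, rfl⟩ := Nat.exists_eq_succ_of_ne_zero (NeZero.ne n)
  rcases eq_or_ne k 0 with rfl | hk
  · simpa using one_le_perimeter hG hfin h0
  let T (i : Fin (k + 1)) : Set (Fin k → ℝ) :=
    toMeasurable volume ((fun x => (splitCoord i x).2) '' essBoundary G)
  have hTP (i) : volume (T i) ≤ perimeter G := by
    rw [measure_toMeasurable]
    simpa [perimeter] using volume_image_splitCoord_snd_le i (essBoundary G)
  have hmp : MeasurePreserving (WithLp.toLp 2 : (Fin (k + 1) → ℝ) → _) :=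
    (EuclideanSpace.volume_preserving_symm_measurableEquiv_toLp (Fin (k + 1))).symm
  have hLW := volume_le_sum_volume_rpow hk (hmp.measurable hG) (T := T)
    (fun i => measurableSet_toMeasurable _ _) fun i => hmp.quasiMeasurePreserving.ae
      (ae_splitCoord_snd_mem hG hfin i (measurableSet_toMeasurable _ _) (subset_toMeasurable _ _))
  rw [hmp.measure_preimage hG.nullMeasurableSet] at hLW
  calc volume G ^ ((((k + 1 : ℕ) : ℝ) - 1) / (k + 1 : ℕ))
      ≤ ((∑ i, volume (T i)) ^ (((k : ℝ) + 1) / k)) ^ ((((k + 1 : ℕ) : ℝ) - 1) / (k + 1 : ℕ)) := by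
        gcongr
        rw [Nat.cast_succ, add_sub_cancel_right]
        positivity
    _ = ∑ i, volume (T i) := by
        rw [← ENNReal.rpow_mul]
        push_cast
        rw [add_sub_cancel_right, div_mul_div_cancel₀' (by positivity),
          div_self (Nat.cast_ne_zero.2 hk), ENNReal.rpow_one]
    _ ≤ (k + 1 : ℕ) * perimeter G := by
        simpa using Finset.sum_le_card_nsmul Finset.univ _ _ fun i _ => hTP i

end Isoperimetric

/-! ### The coarea inequality -/

section Eilenberg

theorem volume_image_mul_ediam_rpow_le {X : Type*} [PseudoEMetricSpace X] {K : NNReal}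
    {f : X → ℝ} {d : ℝ} (hf : LipschitzWith K f) {s : Set X} (hs : ediam s ≠ ∞) :
    ediam s ^ d * volume (f '' s) ≤ K * ⨆ _ : s.Nonempty, ediam s ^ (d + 1) := by
  rcases s.eq_empty_or_nonempty with rfl | hne
  · simp
  have hvol : volume (f '' s) ≤ K * ediam s := (Real.volume_le_diam _).trans (hf.ediam_image_le s)
  rw [ciSup_pos hne]
  rcases eq_or_ne (ediam s) 0 with h0 | h0
  · have hnull : volume (f '' s) = 0 := by simpa [h0] using hvol
    simp [hnull]
  · rw [ENNReal.rpow_add _ _ h0 hs, ENNReal.rpow_one, mul_left_comm]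
    gcongr

variable {X : Type*} [MetricSpace X] [MeasurableSpace X] [BorelSpace X]

theorem exists_cover_tsum_ediam_rpow_le (d : ℝ) {s : Set X} (hs : μH[d] s ≠ ∞) {r ε : ℝ≥0∞}
    (hr : 0 < r) (hε : ε ≠ 0) :
    ∃ t : ℕ → Set X, s ⊆ ⋃ i, t i ∧ (∀ i, ediam (t i) ≤ r) ∧
      ∑' i, ⨆ _ : (t i).Nonempty, ediam (t i) ^ d ≤ μH[d] s + ε := by
  have hlt : (⨅ (t : ℕ → Set X) (_ : s ⊆ ⋃ i, t i) (_ : ∀ i, ediam (t i) ≤ r),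
      ∑' i, ⨆ _ : (t i).Nonempty, ediam (t i) ^ d) < μH[d] s + ε := by
    refine lt_of_le_of_lt ?_ (ENNReal.lt_add_right hs hε)
    rw [Measure.hausdorffMeasure_apply]
    exact le_iSup₂ (f := fun (r : ℝ≥0∞) (_ : 0 < r) =>
      ⨅ (t : ℕ → Set X) (_ : s ⊆ ⋃ i, t i) (_ : ∀ i, ediam (t i) ≤ r),
        ∑' i, ⨆ _ : (t i).Nonempty, ediam (t i) ^ d) r hr
  simp only [iInf_lt_iff] at hlt
  obtain ⟨t, hst, hdiam, hsum⟩ := hlt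
  exact ⟨t, hst, hdiam, hsum.le⟩

theorem hausdorffMeasure_inter_preimage_le_liminf_tsum {f : X → ℝ} {d : ℝ} {A : Set X}
    {S : ℕ → ℕ → Set X} {ε : ℕ → ℝ≥0∞} (hε : Tendsto ε atTop (𝓝 0))
    (hAS : ∀ k, A ⊆ ⋃ i, S k i) (hdiam : ∀ k i, ediam (S k i) ≤ ε k) (t : ℝ) :
    μH[d] (A ∩ f ⁻¹' {t}) ≤ liminf (fun k =>
      ∑' i, (f '' S k i).indicator (fun _ => ediam (S k i) ^ d) t) atTop := by
  refine (Measure.hausdorffMeasure_le_liminf_tsum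
    (ι := fun k => {i : ℕ // t ∈ f '' S k i}) d _ ε hε (fun k i => S k i)
    (Eventually.of_forall fun k i => hdiam k i) (Eventually.of_forall fun k => ?_)).trans
    (liminf_le_liminf (Eventually.of_forall fun k => ?_))
  · rintro x ⟨hx, hxt⟩
    obtain ⟨i, hi⟩ := Set.mem_iUnion.1 (hAS k hx)
    exact Set.mem_iUnion.2 ⟨⟨i, x, hi, hxt⟩, hi⟩
  · exact (tsum_subtype {i | t ∈ f '' S k i} fun i => ediam (S k i) ^ d).le

/- For each cover `S` the sum of `ediam (S i) ^ d` over those `i` for which `S i` meets the level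
set `f ⁻¹' {t}` bounds the premeasure of the level set; as a function of `t` it is dominated by a
sum of multiples of indicator functions of measurable hulls of the sets `f '' S i`, and Fatou's
lemma applies. -/
theorem lintegral_hausdorffMeasure_inter_preimage_le {K : NNReal} {f : X → ℝ}
    (hf : LipschitzWith K f) {d : ℝ} {A : Set X} (hA : μH[d + 1] A ≠ ∞) :
    ∫⁻ t, μH[d] (A ∩ f ⁻¹' {t}) ≤ K * μH[d + 1] A := by
  let ε (k : ℕ) : ℝ≥0∞ := ((k : ℝ≥0∞) + 1)⁻¹
  have hε : Tendsto ε atTop (𝓝 0) := by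
    simpa [ε] using (tendsto_add_atTop_iff_nat 1).2 ENNReal.tendsto_inv_nat_nhds_zero
  have hε0 (k : ℕ) : 0 < ε k := by simp [ε]
  choose S hAS hdiam hsum using fun k =>
    exists_cover_tsum_ediam_rpow_le (d + 1) hA (hε0 k) (hε0 k).ne'
  let g (k : ℕ) (t : ℝ) : ℝ≥0∞ :=
    ∑' i, (toMeasurable volume (f '' S k i)).indicator (fun _ => ediam (S k i) ^ d) t
  have hind (k i) : Measurable
      ((toMeasurable volume (f '' S k i)).indicator fun _ => ediam (S k i) ^ d) :=
    measurable_const.indicator (measurableSet_toMeasurable _ _)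
  have hlevel (t : ℝ) : μH[d] (A ∩ f ⁻¹' {t}) ≤ liminf (fun k => g k t) atTop :=
    (hausdorffMeasure_inter_preimage_le_liminf_tsum hε hAS hdiam t).trans
      (liminf_le_liminf (Eventually.of_forall fun k => ENNReal.tsum_le_tsum fun i =>
        Set.indicator_le_indicator_of_subset (subset_toMeasurable _ _) (fun _ => zero_le) t))
  have hint (k : ℕ) : ∫⁻ t, g k t ≤ K * (μH[d + 1] A + ε k) := by
    refine le_trans ?_ (mul_le_mul_right (hsum k) _)
    rw [lintegral_tsum fun i => (hind k i).aemeasurable, ← ENNReal.tsum_mul_left]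
    refine ENNReal.tsum_le_tsum fun i => ?_
    rw [lintegral_indicator_const (measurableSet_toMeasurable _ _), measure_toMeasurable]
    exact volume_image_mul_ediam_rpow_le hf (ne_top_of_le_ne_top (by simp [ε]) (hdiam k i))
  have hlim : Tendsto (fun k => K * (μH[d + 1] A + ε k)) atTop (𝓝 (K * μH[d + 1] A)) := by
    simpa using ENNReal.Tendsto.const_mul (tendsto_const_nhds.add hε) (Or.inr ENNReal.coe_ne_top)
  calc ∫⁻ t, μH[d] (A ∩ f ⁻¹' {t}) ≤ ∫⁻ t, liminf (fun k => g k t) atTop := lintegral_mono hlevel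
    _ ≤ liminf (fun k => ∫⁻ t, g k t) atTop := lintegral_liminf_le fun k => .tsum (hind k)
    _ ≤ liminf (fun k => K * (μH[d + 1] A + ε k)) atTop :=
        liminf_le_liminf (Eventually.of_forall hint)
    _ = K * μH[d + 1] A := hlim.liminf_eq

end Eilenberg

section Coarea

variable {n : ℕ}

/-- The factor by which the `n`-dimensional Hausdorff measure of `ℝⁿ` exceeds Lebesgue measure. -/
def hausdorffFactor (n : ℕ) : NNReal :=
  Measure.addHaarScalarFactor (μH[(n : ℝ)] : Measure (EuclideanSpace ℝ (Fin n))) volume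

theorem hausdorffMeasure_eq_mul_volume (S : Set (EuclideanSpace ℝ (Fin n))) :
    μH[(n : ℝ)] S = hausdorffFactor n * volume S :=
  congrArg (· S) (Measure.isAddLeftInvariant_eq_smul
    (μH[(n : ℝ)] : Measure (EuclideanSpace ℝ (Fin n))) volume)

theorem lintegral_hausdorffMeasure_inter_preimage_le_volume {f : EuclideanSpace ℝ (Fin n) → ℝ}
    (hf : LipschitzWith 1 f) {S : Set (EuclideanSpace ℝ (Fin n))} (hS : volume S ≠ ∞) :
    ∫⁻ t, μH[(n : ℝ) - 1] (S ∩ f ⁻¹' {t}) ≤ hausdorffFactor n * volume S := by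
  rw [← hausdorffMeasure_eq_mul_volume]
  have hfin : μH[(n : ℝ) - 1 + 1] S ≠ ∞ := by
    rw [sub_add_cancel, hausdorffMeasure_eq_mul_volume]
    exact ENNReal.mul_ne_top ENNReal.coe_ne_top hS
  simpa using lintegral_hausdorffMeasure_inter_preimage_le hf hfin

theorem hausdorffMeasure_sphere_ne_top [NeZero n] :
    μH[(n : ℝ) - 1] (sphere (0 : EuclideanSpace ℝ (Fin n)) 1) ≠ ∞ := by
  obtain ⟨t, ht, hfin⟩ : ∃ t ∈ Set.Ioo (1 : ℝ) 2,
      μH[(n : ℝ) - 1] (sphere (0 : EuclideanSpace ℝ (Fin n)) t) ≠ ∞ := by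
    by_contra! hinf
    let U : Set (EuclideanSpace ℝ (Fin n)) := ball 0 2
    have hU : volume U ≠ ∞ := measure_ball_lt_top.ne
    refine (ENNReal.mul_ne_top (ENNReal.coe_ne_top (r := hausdorffFactor n)) hU).lt_top.not_ge ?_
    calc ∞ = ∫⁻ _ in Set.Ioo (1 : ℝ) 2, ∞ := by
          rw [setLIntegral_const, Real.volume_Ioo]
          norm_num
      _ ≤ ∫⁻ t in Set.Ioo (1 : ℝ) 2, μH[(n : ℝ) - 1] (U ∩ norm ⁻¹' {t}) := by
          refine setLIntegral_mono' measurableSet_Ioo fun t ht => ?_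
          rw [← hinf t ht]
          exact measure_mono fun x hx => by simp_all [U]
      _ ≤ hausdorffFactor n * volume U := (setLIntegral_le_lintegral _ _).trans
          (lintegral_hausdorffMeasure_inter_preimage_le_volume lipschitzWith_one_norm hU)
  have ht0 : 0 < t := one_pos.trans ht.1
  have hsphere : sphere (0 : EuclideanSpace ℝ (Fin n)) 1 = t⁻¹ • sphere 0 t := by
    rw [smul_sphere' (inv_ne_zero ht0.ne')]
    simp [abs_of_pos ht0, ht0.ne']
  rw [hsphere, Measure.hausdorffMeasure_smul₀ (sub_nonneg.2 (Nat.one_le_cast.2 NeZero.one_le))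
    (inv_ne_zero ht0.ne')]
  exact ENNReal.mul_ne_top (by simp) hfin

theorem perimeter_ball_ne_top [NeZero n] :
    perimeter (ball (0 : EuclideanSpace ℝ (Fin n)) 1) ≠ ∞ := by
  refine ne_top_of_le_ne_top hausdorffMeasure_sphere_ne_top (measure_mono ?_)
  simpa [essBoundary_empty] using
    (essBoundary_union_subset (F := ∅) .empty measurableSet_ball).trans
      (Set.union_subset_union_right _ (Set.sdiff_subset.trans frontier_ball_subset_sphere))

end Coarea

/-! ### Decay of the missing volume -/

section Decay

variable {n : ℕ}

theorem le_half_pow_of_mul_rpow_le [NeZero n] {δ K c x y : ℝ} (hc : 0 < c) (hK : 0 ≤ K)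
    (hδ : 2 ^ (n - 1) * K * c < δ) (hxy : 0 < x → δ * x ^ (((n : ℝ) - 1) / n) ≤ K * y)
    (hy : y ≤ c ^ n) : x ≤ (c / 2) ^ n := by
  by_contra! hx
  obtain ⟨j, rfl⟩ := Nat.exists_eq_succ_of_ne_zero (NeZero.ne n)
  have hc2 : (0 : ℝ) < (c / 2) ^ (j + 1) := by positivity
  have hroot : (c / 2) ^ j ≤ x ^ ((((j + 1 : ℕ) : ℝ) - 1) / (j + 1 : ℕ)) :=
    calc (c / 2) ^ j = ((c / 2) ^ (j + 1)) ^ ((((j + 1 : ℕ) : ℝ) - 1) / (j + 1 : ℕ)) := by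
          rw [← Real.rpow_natCast _ (j + 1), ← Real.rpow_mul (by positivity),
            mul_div_cancel₀ _ (by positivity), ← Real.rpow_natCast]
          simp
      _ ≤ x ^ ((((j + 1 : ℕ) : ℝ) - 1) / (j + 1 : ℕ)) :=
          Real.rpow_le_rpow hc2.le hx.le (by push_cast; rw [add_sub_cancel_right]; positivity)
  have hlt : 0 < c ^ j := by positivity
  have hδ0 : 0 ≤ δ := le_trans (by positivity) hδ.le
  have : δ * c ^ j ≤ (2 ^ j * K * c) * c ^ j :=
    calc δ * c ^ j = 2 ^ j * (δ * (c / 2) ^ j) := by rw [div_pow]; field_simp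
      _ ≤ 2 ^ j * (K * c ^ (j + 1)) := by
          refine mul_le_mul_of_nonneg_left ?_ (by positivity)
          exact (mul_le_mul_of_nonneg_left hroot hδ0).trans
            ((hxy (hc2.trans hx)).trans (mul_le_mul_of_nonneg_left hy hK))
      _ = (2 ^ j * K * c) * c ^ j := by ring
  exact hδ.not_ge (le_of_mul_le_mul_right this hlt)

/- De Giorgi iteration along the points `a + (b - a) / 2 ^ k`. -/
theorem nonpos_of_mul_rpow_le [NeZero n] {h : ℝ → ℝ} {a b K c : ℝ} (hab : a < b)
    (hmono : Monotone h) (hK : 0 ≤ K) (hc : 0 < c)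
    (hode : ∀ s t, a < s → s < t → t ≤ b → 0 < h s →
      (t - s) * h s ^ (((n : ℝ) - 1) / n) ≤ K * h t)
    (hKc : 2 ^ n * K * c < b - a) (hb : h b ≤ c ^ n) : h a ≤ 0 := by
  have hpos (k : ℕ) : 0 < (b - a) / 2 ^ k := div_pos (sub_pos.2 hab) (by positivity)
  have hdecay (k : ℕ) : h (a + (b - a) / 2 ^ k) ≤ (c / 2 ^ k) ^ n := by
    induction k with
    | zero => simpa using hb
    | succ k ih =>
      have hhalf : (b - a) / 2 ^ k = 2 * ((b - a) / 2 ^ (k + 1)) := by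
        rw [pow_succ]
        field_simp
      have hle : (b - a) / 2 ^ k ≤ b - a :=
        div_le_self (sub_pos.2 hab).le (one_le_pow₀ one_le_two)
      rw [pow_succ (2 : ℝ) k, ← div_div c]
      refine le_half_pow_of_mul_rpow_le (δ := (b - a) / 2 ^ (k + 1)) (by positivity) hK ?_
        (fun hx => ?_) ih
      · obtain ⟨j, rfl⟩ := Nat.exists_eq_succ_of_ne_zero (NeZero.ne n)
        rw [lt_div_iff₀ (by positivity)]
        refine lt_of_eq_of_lt ?_ hKc
        simp only [Nat.succ_eq_add_one, add_tsub_cancel_right]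
        field_simp
        ring
      · have := hode (a + (b - a) / 2 ^ (k + 1)) (a + (b - a) / 2 ^ k) (by linarith [hpos (k + 1)])
          (by linarith [hpos (k + 1)]) (by linarith) (by rwa [pow_succ])
        convert this using 2
        · linarith
        · rw [pow_succ]
  have hlim : Tendsto (fun k : ℕ => (c / 2 ^ k) ^ n) atTop (𝓝 0) := by
    have h0 := (tendsto_const_nhds (x := c)).div_atTop
      (tendsto_pow_atTop_atTop_of_one_lt (one_lt_two (α := ℝ)))
    simpa [NeZero.ne n] using h0.pow n
  exact ge_of_tendsto' hlim fun k => (hmono (by linarith [hpos k])).trans (hdecay k)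

/-- The constant in the differential inequality for the volume missing from a set. -/
def decayConst (n : ℕ) : NNReal := 2 * n * hausdorffFactor n

theorem ofReal_mul_volume_rpow_le [NeZero n] {f : EuclideanSpace ℝ (Fin n) → ℝ}
    (hf : LipschitzWith 1 f) {G : Set (EuclideanSpace ℝ (Fin n))} (hG : MeasurableSet G)
    (hP : perimeter G ≠ ∞) {s t : ℝ} (hpos : volume ({x | f x < s} \ G) ≠ 0)
    (hfin : volume ({x | f x < t} \ G) ≠ ∞)
    (hle : ∀ r ∈ Set.Ioo s t, perimeter G ≤ perimeter (G ∪ {x | f x < r})) :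
    ENNReal.ofReal (t - s) * volume ({x | f x < s} \ G) ^ (((n : ℝ) - 1) / n) ≤
      decayConst n * volume ({x | f x < t} \ G) := by
  let D (r : ℝ) : Set (EuclideanSpace ℝ (Fin n)) := {x | f x < r}
  have hD (r) : MeasurableSet (D r) := measurableSet_lt hf.continuous.measurable measurable_const
  have hmono {r r' : ℝ} (h : r ≤ r') : D r \ G ⊆ D r' \ G :=
    Set.sdiff_subset_sdiff_left fun x hx => lt_of_lt_of_le hx h
  let A : Set (EuclideanSpace ℝ (Fin n)) := D t \ {x | HasDensity G x 1}
  have hA : volume A ≤ volume (D t \ G) := by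
    refine measure_mono_ae ?_
    filter_upwards [ae_hasDensity_one hG] with x hx hxA
    exact ⟨hxA.1, fun h => hxA.2 (hx h)⟩
  have hlevel (r) (hr : r ∈ Set.Ioo s t) : volume (D s \ G) ^ (((n : ℝ) - 1) / n) ≤
      (2 * n) * μH[(n : ℝ) - 1] (A ∩ f ⁻¹' {r}) := by
    have hne : volume (D r \ G) ≠ 0 := fun h => hpos (measure_mono_null (hmono hr.1.le) h)
    calc volume (D s \ G) ^ (((n : ℝ) - 1) / n) ≤ volume (D r \ G) ^ (((n : ℝ) - 1) / n) :=
          ENNReal.rpow_le_rpow (measure_mono (hmono hr.1.le)) (div_nonneg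
            (sub_nonneg.2 (Nat.one_le_cast.2 NeZero.one_le)) (Nat.cast_nonneg n))
      _ ≤ n * perimeter (D r \ G) := volume_rpow_le_mul_perimeter ((hD r).diff hG)
          (ne_top_of_le_ne_top hfin (measure_mono (hmono hr.2.le))) hne
      _ ≤ n * (2 * μH[(n : ℝ) - 1] (frontier (D r) \ {x | HasDensity G x 1})) := by
          gcongr
          exact perimeter_sdiff_le hG (hD r) hP (hle r hr)
      _ ≤ n * (2 * μH[(n : ℝ) - 1] (A ∩ f ⁻¹' {r})) := by
          gcongr
          rintro x ⟨hx, hx'⟩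
          have hxr : f x = r := frontier_lt_subset_eq hf.continuous continuous_const hx
          exact ⟨⟨hxr.trans_lt hr.2, hx'⟩, hxr⟩
      _ = (2 * n) * μH[(n : ℝ) - 1] (A ∩ f ⁻¹' {r}) := by ring
  calc ENNReal.ofReal (t - s) * volume (D s \ G) ^ (((n : ℝ) - 1) / n)
      = ∫⁻ _ in Set.Ioo s t, volume (D s \ G) ^ (((n : ℝ) - 1) / n) := by
        rw [setLIntegral_const, Real.volume_Ioo, mul_comm]
    _ ≤ ∫⁻ r, (2 * n) * μH[(n : ℝ) - 1] (A ∩ f ⁻¹' {r}) :=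
        (setLIntegral_mono' measurableSet_Ioo hlevel).trans (setLIntegral_le_lintegral _ _)
    _ = (2 * n) * ∫⁻ r, μH[(n : ℝ) - 1] (A ∩ f ⁻¹' {r}) :=
        lintegral_const_mul' _ _ (ENNReal.mul_ne_top (by simp) (by simp))
    _ ≤ (2 * n) * (hausdorffFactor n * volume (D t \ G)) := by
        gcongr
        exact (lintegral_hausdorffMeasure_inter_preimage_le_volume hf
          (ne_top_of_le_ne_top hfin hA)).trans (by gcongr)
    _ = decayConst n * volume (D t \ G) := by
        simp [decayConst, mul_assoc]

theorem volume_setOf_lt_sdiff_eq_zero [NeZero n] {f : EuclideanSpace ℝ (Fin n) → ℝ}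
    (hf : LipschitzWith 1 f) {G : Set (EuclideanSpace ℝ (Fin n))} (hG : MeasurableSet G)
    (hP : perimeter G ≠ ∞) {a b c : ℝ} (hab : a < b) (hc : 0 < c)
    (hKc : 2 ^ n * decayConst n * c < b - a)
    (hfin : ∀ t, volume ({x | f x < t} \ G) ≠ ∞)
    (hb : volume ({x | f x < b} \ G) ≤ ENNReal.ofReal (c ^ n))
    (hle : ∀ r ∈ Set.Ioo a b, volume ({x | f x < r} \ G) ≠ 0 →
      perimeter G ≤ perimeter (G ∪ {x | f x < r})) :
    volume ({x | f x < a} \ G) = 0 := by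
  have hmono {r r' : ℝ} (h : r ≤ r') : volume ({x | f x < r} \ G) ≤ volume ({x | f x < r'} \ G) :=
    measure_mono (Set.sdiff_subset_sdiff_left fun x hx => lt_of_lt_of_le hx h)
  have hzero := nonpos_of_mul_rpow_le (n := n) (h := fun t => (volume ({x | f x < t} \ G)).toReal)
    hab (fun r r' h => ENNReal.toReal_mono (hfin r') (hmono h)) (decayConst n).2 hc
    (fun s t has hst htb hs => ?_) hKc (ENNReal.toReal_le_of_le_ofReal (by positivity) hb)
  · exact ((ENNReal.toReal_eq_zero_iff _).1 (hzero.antisymm ENNReal.toReal_nonneg)).resolve_right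
      (hfin a)
  · have hs0 : volume ({x | f x < s} \ G) ≠ 0 := (ENNReal.toReal_pos_iff.1 hs).1.ne'
    have := ENNReal.toReal_mono (ENNReal.mul_ne_top ENNReal.coe_ne_top (hfin t))
      (ofReal_mul_volume_rpow_le hf hG hP hs0 (hfin t) fun r hr =>
        hle r ⟨has.trans hr.1, hr.2.trans_le htb⟩
          fun h => hs0 (le_zero_iff.1 ((hmono hr.1.le).trans h.le)))
    simpa [ENNReal.toReal_mul, ENNReal.toReal_ofReal (sub_pos.2 hst).le,
      ← ENNReal.toReal_rpow] using this

theorem volume_ball_sdiff_eq_zero [NeZero n] {F : Set (EuclideanSpace ℝ (Fin n))}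
    (hF : MeasurableSet F) (hP : perimeter F ≠ ∞) {a b c : ℝ} (hab : a < b) (hc : 0 < c)
    (hKc : 2 ^ n * decayConst n * c < b - a)
    (hb : volume (ball 0 b \ F) ≤ ENNReal.ofReal (c ^ n))
    (hle : ∀ r ∈ Set.Ioo a b, volume (ball 0 r \ F) ≠ 0 →
      perimeter F ≤ perimeter (F ∪ ball 0 r)) :
    volume (ball 0 a \ F) = 0 := by
  have hball (r : ℝ) : {x : EuclideanSpace ℝ (Fin n) | ‖x‖ < r} = ball 0 r := by
    ext x
    simp
  simpa only [hball] using volume_setOf_lt_sdiff_eq_zero lipschitzWith_one_norm hF hP hab hc hKc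
    (fun t => by
      rw [hball]
      exact ne_top_of_le_ne_top measure_ball_lt_top.ne (measure_mono Set.sdiff_subset))
    (by rwa [hball]) (by simpa only [hball] using hle)

theorem volume_sdiff_closedBall_eq_zero [NeZero n] {F : Set (EuclideanSpace ℝ (Fin n))}
    (hF : MeasurableSet F) (hP : perimeter F ≠ ∞) (hV : volume F ≠ ∞) {a b c : ℝ} (hab : a < b)
    (hc : 0 < c) (hKc : 2 ^ n * decayConst n * c < b - a)
    (hb : volume (F \ closedBall 0 a) ≤ ENNReal.ofReal (c ^ n))
    (hle : ∀ r ∈ Set.Ioo a b, volume (F \ closedBall 0 r) ≠ 0 →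
      perimeter F ≤ perimeter (F ∩ closedBall 0 r)) :
    volume (F \ closedBall 0 b) = 0 := by
  have hcompl (r : ℝ) : {x : EuclideanSpace ℝ (Fin n) | -‖x‖ < r} = (closedBall 0 (-r))ᶜ := by
    ext x
    simp [neg_lt]
  have hsdiff (r : ℝ) : {x : EuclideanSpace ℝ (Fin n) | -‖x‖ < r} \ Fᶜ = F \ closedBall 0 (-r) := by
    rw [hcompl, Set.sdiff_compl, Set.inter_comm, Set.sdiff_eq]
  have hzero := volume_setOf_lt_sdiff_eq_zero (f := fun x => -‖x‖) lipschitzWith_one_norm.neg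
    hF.compl (by rwa [perimeter_compl hF]) (neg_lt_neg hab) hc (by linarith)
    (fun t => by
      rw [hsdiff]
      exact ne_top_of_le_ne_top hV (measure_mono Set.sdiff_subset))
    (by rwa [hsdiff, neg_neg])
    (fun r hr hne => by
      rw [hsdiff] at hne
      rw [hcompl, ← Set.compl_inter, perimeter_compl hF,
        perimeter_compl (hF.inter isClosed_closedBall.measurableSet)]
      exact hle (-r) ⟨lt_neg.1 hr.2, neg_lt.1 hr.1⟩ hne)
  rwa [hsdiff, neg_neg] at hzero

end Decay

/-! ### Locating the essential boundary -/

section Location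

variable {n : ℕ} {F : Set (EuclideanSpace ℝ (Fin n))} {x y : EuclideanSpace ℝ (Fin n)} {r : ℝ}

/-- Both `F` and its complement fill more than a third of the ball of centre `y` and radius `r`.
Any threshold below one half would do: by connectedness such balls exist wherever `F` and its
complement both have positive volume. -/
def Straddles (F : Set (EuclideanSpace ℝ (Fin n))) (y : EuclideanSpace ℝ (Fin n)) (r : ℝ) : Prop :=
  volume (ball y r) / 3 < volume (F ∩ ball y r) ∧ volume (ball y r) / 3 < volume (Fᶜ ∩ ball y r)

theorem Straddles.compl (h : Straddles F y r) : Straddles Fᶜ y r :=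
  ⟨h.2, by simpa only [compl_compl] using h.1⟩

theorem Straddles.radius_pos (h : Straddles F y r) : 0 < r := by
  by_contra! hr
  simpa [ball_eq_empty.2 hr] using h.1

theorem HasDensity.eventually_div_three_lt (h : HasDensity F x 1) :
    ∀ᶠ r in 𝓝[>] 0, volume (ball x r) / 3 < volume (F ∩ ball x r) := by
  filter_upwards [h.eventually (lt_mem_nhds (show (1 / 3 : ℝ) < 1 by norm_num)),
    self_mem_nhdsWithin] with r hr hr0
  rw [lt_div_iff₀ (toReal_volume_ball_pos x hr0)] at hr
  rw [← ENNReal.toReal_lt_toReal (ENNReal.div_ne_top measure_ball_lt_top.ne (by simp))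
    (volume_inter_ball_ne_top F x r), ENNReal.toReal_div]
  simpa [div_eq_inv_mul] using hr

theorem div_three_lt_volume_inter_ball_or (hF : MeasurableSet F)
    (y : EuclideanSpace ℝ (Fin n)) (hr : 0 < r) :
    volume (ball y r) / 3 < volume (F ∩ ball y r) ∨
      volume (ball y r) / 3 < volume (Fᶜ ∩ ball y r) := by
  by_contra! h
  have hball : volume (ball y r) ≠ ∞ := measure_ball_lt_top.ne
  have hthird : volume (ball y r) / 3 ≠ ∞ := ENNReal.div_ne_top hball (by simp)
  have hsplit : volume (F ∩ ball y r) + volume (Fᶜ ∩ ball y r) = volume (ball y r) := by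
    rw [Set.inter_comm, Set.inter_comm Fᶜ, ← Set.sdiff_eq, measure_inter_add_sdiff _ hF]
  have hlt : volume (ball y r) / 3 + volume (ball y r) / 3 < volume (ball y r) :=
    (ENNReal.lt_add_right (ENNReal.add_ne_top.2 ⟨hthird, hthird⟩)
      (ENNReal.div_pos (measure_ball_pos volume y hr).ne' (by simp)).ne').trans_eq
      (ENNReal.add_thirds _)
  exact (hsplit.symm.trans_le (add_le_add h.1 h.2)).not_gt hlt

theorem exists_hasDensity_one_mem_ball [NeZero n] (hF : MeasurableSet F)
    (h : volume (F ∩ ball y r) ≠ 0) : ∃ p ∈ ball y r, HasDensity F p 1 := by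
  by_contra! hnone
  refine h (measure_eq_zero_iff_ae_notMem.2 ?_)
  filter_upwards [ae_hasDensity_one hF] with p hp hpF
  exact hnone p hpF.2 (hp hpF.1)

theorem exists_straddles [NeZero n] (hF : MeasurableSet F) (h : volume (F ∩ ball x r) ≠ 0)
    (hc : volume (Fᶜ ∩ ball x r) ≠ 0) {e : ℝ} (he : 0 < e) :
    ∃ y s, Straddles F y s ∧ s < e ∧ closedBall y s ⊆ ball x r := by
  obtain ⟨p, hp, hpF⟩ := exists_hasDensity_one_mem_ball hF h
  obtain ⟨q, hq, hqF⟩ := exists_hasDensity_one_mem_ball hF.compl hc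
  let M := max (dist p x) (dist q x)
  have hM : 0 < min e (r - M) := lt_min he (sub_pos.2 (max_lt hp hq))
  obtain ⟨s, ⟨hsp, hsq⟩, hs0, hs⟩ := ((hpF.eventually_div_three_lt.and
    hqF.eventually_div_three_lt).and (Ioo_mem_nhdsGT hM)).exists
  have hopen (G : Set (EuclideanSpace ℝ (Fin n))) :
      IsOpen {y | volume (ball y s) / 3 < volume (G ∩ ball y s)} := by
    simp only [fun y => Measure.addHaar_ball_center volume y s]
    exact isOpen_setOf_lt_measure_inter_ball volume G s _
  obtain ⟨y, hy, hyF⟩ := (convex_closedBall x M).isPreconnected _ _ (hopen F) (hopen Fᶜ)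
    (fun y _ => div_three_lt_volume_inter_ball_or hF y hs0)
    ⟨p, le_max_left (dist p x) (dist q x), hsp⟩ ⟨q, le_max_right (dist p x) (dist q x), hsq⟩
  refine ⟨y, s, hyF, hs.trans_le (min_le_left _ _), closedBall_subset_ball' ?_⟩
  linarith [mem_closedBall.1 hy, hs.trans_le (min_le_right _ _)]

theorem not_hasDensity_zero_of_straddles {y : ℕ → EuclideanSpace ℝ (Fin n)} {r : ℕ → ℝ}
    (hr : Tendsto r atTop (𝓝 0)) (h : ∀ k, Straddles F (y k) (r k))
    (hx : ∀ k, x ∈ closedBall (y k) (r k)) : ¬ HasDensity F x 0 := by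
  intro hdens
  have hr0 (k) : 0 < 2 * r k := mul_pos two_pos (h k).radius_pos
  have hlim : Tendsto (fun k => 2 * r k) atTop (𝓝[>] 0) :=
    tendsto_nhdsWithin_iff.2 ⟨by simpa using hr.const_mul 2, .of_forall hr0⟩
  refine (ge_of_tendsto' (b := (1 / 3 : ℝ) / 2 ^ n) (hdens.comp hlim) fun k => ?_).not_gt
    (by positivity)
  have hball : (volume (ball x (2 * r k))).toReal = 2 ^ n * (volume (ball (y k) (r k))).toReal := by
    rw [Measure.addHaar_ball_mul_of_pos _ _ two_pos, ← Measure.addHaar_ball_center volume (y k),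
      ENNReal.toReal_mul, finrank_euclideanSpace_fin, ENNReal.toReal_ofReal (by positivity)]
  have hsub : F ∩ ball (y k) (r k) ⊆ F ∩ ball x (2 * r k) := by
    refine Set.inter_subset_inter_right _ (ball_subset_ball' ?_)
    linarith [mem_closedBall'.1 (hx k)]
  have hthird :
      (volume (ball (y k) (r k))).toReal / 3 ≤ (volume (F ∩ ball x (2 * r k))).toReal := by
    simpa [ENNReal.toReal_div] using ENNReal.toReal_mono (volume_inter_ball_ne_top F x _)
      ((h k).1.le.trans (measure_mono hsub))
  simp only [Function.comp_apply]
  rw [le_div_iff₀ (toReal_volume_ball_pos x (hr0 k)), hball]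
  refine le_of_eq_of_le ?_ hthird
  field_simp

/- A nested sequence of shrinking straddled balls closes in on a point of the essential boundary. -/
theorem exists_mem_essBoundary_of_volume_inter_ball_ne_zero [NeZero n] (hF : MeasurableSet F)
    (h : volume (F ∩ ball x r) ≠ 0) (hc : volume (Fᶜ ∩ ball x r) ≠ 0) :
    ∃ z ∈ ball x r, z ∈ essBoundary F := by
  obtain ⟨y₀, r₀, h₀, -, hsub₀⟩ := exists_straddles hF h hc one_pos
  have hnext (q : {q : EuclideanSpace ℝ (Fin n) × ℝ // Straddles F q.1 q.2}) :
      ∃ q' : {q : EuclideanSpace ℝ (Fin n) × ℝ // Straddles F q.1 q.2},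
        q'.1.2 < q.1.2 / 2 ∧ closedBall q'.1.1 q'.1.2 ⊆ ball q.1.1 q.1.2 := by
    obtain ⟨y, s, hs, hlt, hsub⟩ := exists_straddles hF (pos_of_gt q.2.1).ne' (pos_of_gt q.2.2).ne'
      (half_pos q.2.radius_pos)
    exact ⟨⟨(y, s), hs⟩, hlt, hsub⟩
  choose next hlt hsub using hnext
  let q (k : ℕ) := next^[k] ⟨(y₀, r₀), h₀⟩
  have hq (k) : q (k + 1) = next (q k) := Function.iterate_succ_apply' ..
  have hradius (k) : (q k).1.2 ≤ r₀ * (1 / 2) ^ k := by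
    induction k with
    | zero => simp [q]
    | succ k ih =>
      rw [hq, pow_succ]
      linarith [hlt (q k)]
  have hlim : Tendsto (fun k => (q k).1.2) atTop (𝓝 0) :=
    squeeze_zero (fun k => (q k).2.radius_pos.le) hradius <| by
      simpa using (tendsto_pow_atTop_nhds_zero_of_lt_one (r := (1 / 2 : ℝ)) (by norm_num)
        (by norm_num)).const_mul r₀
  obtain ⟨z, hz⟩ := IsCompact.nonempty_iInter_of_sequence_nonempty_isCompact_isClosed
    (fun k => closedBall (q k).1.1 (q k).1.2)
    (fun k => by
      rw [hq]
      exact (hsub (q k)).trans ball_subset_closedBall)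
    (fun k => nonempty_closedBall.2 (q k).2.radius_pos.le) (isCompact_closedBall _ _)
    (fun k => isClosed_closedBall)
  rw [Set.mem_iInter] at hz
  exact ⟨z, hsub₀ (hz 0), not_hasDensity_zero_of_straddles hlim (fun k => (q k).2) hz,
    fun hone => not_hasDensity_zero_of_straddles hlim (fun k => (q k).2.compl) hz
      ((hasDensity_one_iff hF).1 hone)⟩

theorem le_norm_of_mem_essBoundary (hF : MeasurableSet F) {a : ℝ}
    (ha : volume (ball 0 a \ F) = 0) (hx : x ∈ essBoundary F) : a ≤ ‖x‖ := by
  by_contra! hlt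
  refine hx.2 (hasDensity_one_of_volume_eq_zero hF (sub_pos.2 hlt) (measure_mono_null ?_ ha))
  exact Set.sdiff_subset_sdiff_left (ball_subset_ball' (by simp))

theorem norm_le_of_mem_essBoundary {b : ℝ} (hb : volume (F \ closedBall 0 b) = 0)
    (hx : x ∈ essBoundary F) : ‖x‖ ≤ b := by
  by_contra! hlt
  refine hx.1 (hasDensity_zero_of_volume_eq_zero (sub_pos.2 hlt) (measure_mono_null ?_ hb))
  rintro y ⟨hyF, hyx⟩
  refine ⟨hyF, fun hy => ?_⟩
  rw [mem_ball, dist_eq_norm, norm_sub_rev] at hyx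
  linarith [mem_closedBall_zero_iff.1 hy, norm_sub_norm_le x y]

theorem exists_mem_essBoundary_mem_ball_of_norm_eq_one [NeZero n] (hF : MeasurableSet F) {η : ℝ}
    (hη : 0 < η) (hη2 : η < 1 / 2) (hin : volume (ball 0 (1 - η) \ F) = 0)
    (hout : volume (F \ closedBall 0 (1 + η)) = 0) (hx : ‖x‖ = 1) :
    ∃ y ∈ ball x (2 * η), y ∈ essBoundary F := by
  have hmem (t : ℝ) (ht : |t| < 2 * η) : (1 + t) • x ∈ ball x (2 * η) := by
    rwa [mem_ball, dist_eq_norm, add_smul, one_smul, add_sub_cancel_left, norm_smul, hx, mul_one]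
  have hnorm (t : ℝ) (ht : -1 < t) : ‖(1 + t) • x‖ = 1 + t := by
    rw [norm_smul, hx, mul_one, Real.norm_of_nonneg (by linarith)]
  refine exists_mem_essBoundary_of_volume_inter_ball_ne_zero hF (fun h => ?_) fun h => ?_
  · refine (isOpen_ball.inter isOpen_ball).measure_ne_zero volume
      (U := ball (0 : EuclideanSpace ℝ (Fin n)) (1 - η) ∩ ball x (2 * η))
      ⟨(1 + -(3 / 2 * η)) • x, ?_, hmem _ ?_⟩
      (measure_mono_null (fun y hy => ?_) (measure_union_null hin h))
    · rw [mem_ball_zero_iff, hnorm] <;> linarith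
    · rw [abs_neg, abs_of_pos] <;> linarith
    · exact (em (y ∈ F)).symm.imp (fun hyF => ⟨hy.1, hyF⟩) fun hyF => ⟨hyF, hy.2⟩
  · refine (isClosed_closedBall.isOpen_compl.inter isOpen_ball).measure_ne_zero volume
      (U := (closedBall (0 : EuclideanSpace ℝ (Fin n)) (1 + η))ᶜ ∩ ball x (2 * η))
      ⟨(1 + 3 / 2 * η) • x, ?_, hmem _ ?_⟩
      (measure_mono_null (fun y hy => ?_) (measure_union_null hout h))
    · rw [Set.mem_compl_iff, mem_closedBall_zero_iff, hnorm] <;> linarith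
    · rw [abs_of_pos] <;> linarith
    · exact (em (y ∈ F)).imp (fun hyF => ⟨hyF, hy.1⟩) fun hyF => ⟨hyF, hy.2⟩

theorem hausdorffEDist_essBoundary_sphere_le [NeZero n] (hF : MeasurableSet F) {η : ℝ}
    (hη : 0 < η) (hη2 : η < 1 / 2) (hin : volume (ball 0 (1 - η) \ F) = 0)
    (hout : volume (F \ closedBall 0 (1 + η)) = 0) :
    hausdorffEDist (essBoundary F) (sphere 0 1) ≤ ENNReal.ofReal (2 * η) := by
  refine hausdorffEDist_le_of_mem_edist (fun x hx => ?_) fun x hx => ?_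
  · have hlb := le_norm_of_mem_essBoundary hF hin hx
    have hub := norm_le_of_mem_essBoundary hout hx
    have hx0 : 0 < ‖x‖ := by linarith
    have hdiff : x - ‖x‖⁻¹ • x = ((‖x‖ - 1) * ‖x‖⁻¹) • x := by
      rw [sub_mul, sub_smul, mul_inv_cancel₀ hx0.ne', one_mul, one_smul]
    refine ⟨‖x‖⁻¹ • x, by simp [norm_smul, hx0.ne'], ?_⟩
    rw [edist_dist, dist_eq_norm, hdiff, norm_smul, norm_mul, norm_inv, norm_norm,
      inv_mul_cancel_right₀ hx0.ne', Real.norm_eq_abs]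
    exact ENNReal.ofReal_le_ofReal (abs_le.2 ⟨by linarith, by linarith⟩)
  · obtain ⟨y, hy, hyF⟩ := exists_mem_essBoundary_mem_ball_of_norm_eq_one hF hη hη2 hin hout
      (mem_sphere_zero_iff_norm.1 hx)
    rw [mem_ball'] at hy
    exact ⟨y, hyF, by rw [edist_dist]; exact ENNReal.ofReal_le_ofReal hy.le⟩

end Location

/-! ### Scaling of the energies -/

section EnergyScaling

variable {n : ℕ} {c α β A : ℝ}

theorem setLIntegral_smul_set (hc : 0 < c) (E : Set (EuclideanSpace ℝ (Fin n)))
    (f : EuclideanSpace ℝ (Fin n) → ℝ≥0∞) :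
    ∫⁻ x in c • E, f x = ENNReal.ofReal (c ^ n) * ∫⁻ x in E, f (c • x) := by
  have hemb : MeasurableEmbedding (fun x : EuclideanSpace ℝ (Fin n) => c • x) :=
    (Homeomorph.smulOfNeZero c hc.ne').measurableEmbedding
  have hrestrict : (volume.restrict E).map (c • ·) =
      ENNReal.ofReal (c ^ n)⁻¹ • volume.restrict (c • E) := by
    have hpre : (c • ·) ⁻¹' (c • E) = E := by
      rw [Set.preimage_smul₀ hc.ne', inv_smul_smul₀ hc.ne']
    rw [← congrArg volume.restrict hpre, ← hemb.restrict_map,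
      Measure.map_addHaar_smul volume hc.ne', finrank_euclideanSpace_fin,
      abs_of_pos (by positivity), Measure.restrict_smul]
  rw [← hemb.lintegral_map, hrestrict, lintegral_smul_measure, smul_eq_mul, ← mul_assoc,
    ← ENNReal.ofReal_mul (by positivity), mul_inv_cancel₀ (by positivity), ENNReal.ofReal_one,
    one_mul]

theorem potEnergy_smul (hc : 0 < c) (E : Set (EuclideanSpace ℝ (Fin n))) :
    potEnergy β A (c • E) = ENNReal.ofReal (c ^ (n + β)) * potEnergy β A E := by
  have hscale (x : EuclideanSpace ℝ (Fin n)) :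
      ENNReal.ofReal (A * ‖c • x‖ ^ β) = ENNReal.ofReal (c ^ β) * ENNReal.ofReal (A * ‖x‖ ^ β) := by
    rw [← ENNReal.ofReal_mul (by positivity), norm_smul, Real.norm_of_nonneg hc.le,
      Real.mul_rpow hc.le (norm_nonneg _), mul_left_comm]
  simp only [potEnergy, setLIntegral_smul_set hc, hscale]
  rw [lintegral_const_mul' _ _ ENNReal.ofReal_ne_top, ← mul_assoc,
    ← ENNReal.ofReal_mul (by positivity), Real.rpow_add hc, Real.rpow_natCast]

theorem rieszEnergy_smul (hc : 0 < c) (E : Set (EuclideanSpace ℝ (Fin n))) :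
    rieszEnergy α (c • E) = ENNReal.ofReal (c ^ (n + α)) * rieszEnergy α E := by
  have hscale (x y : EuclideanSpace ℝ (Fin n)) : ENNReal.ofReal (‖c • x - c • y‖ ^ (α - n)) =
      ENNReal.ofReal (c ^ (α - n)) * ENNReal.ofReal (‖x - y‖ ^ (α - n)) := by
    rw [← ENNReal.ofReal_mul (by positivity), ← smul_sub, norm_smul, Real.norm_of_nonneg hc.le,
      Real.mul_rpow hc.le (norm_nonneg _)]
  have hexp : c ^ n * (c ^ n * c ^ (α - n)) = c ^ (n + α) := by
    rw [← Real.rpow_natCast, ← Real.rpow_add hc, ← Real.rpow_add hc]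
    congr 1
    ring
  simp only [rieszEnergy, setLIntegral_smul_set hc, hscale,
    lintegral_const_mul' _ _ ENNReal.ofReal_ne_top]
  rw [← hexp, ENNReal.ofReal_mul (by positivity), ENNReal.ofReal_mul (by positivity), mul_assoc,
    mul_assoc]

/-- The total energy with weights `δ` on the perimeter and `ε` on the Riesz energy; these weights
appear when a set of large mass is rescaled to the volume of the unit ball. -/
def scaledEnergy (α β A : ℝ) (δ ε : ℝ≥0∞) (E : Set (EuclideanSpace ℝ (Fin n))) : ℝ≥0∞ :=
  δ * perimeter E + ε * rieszEnergy α E + potEnergy β A E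

theorem scaledEnergy_one_one (E : Set (EuclideanSpace ℝ (Fin n))) :
    scaledEnergy α β A 1 1 E = totalEnergy α β A E := by
  simp only [scaledEnergy, totalEnergy, one_mul]

theorem scaledEnergy_smul [NeZero n] (hc : 0 < c) (δ ε : ℝ≥0∞)
    (E : Set (EuclideanSpace ℝ (Fin n))) :
    scaledEnergy α β A δ ε (c • E) = ENNReal.ofReal (c ^ (n + β)) *
      scaledEnergy α β A (δ * ENNReal.ofReal (c ^ (-1 - β)))
        (ε * ENNReal.ofReal (c ^ (α - β))) E := by
  have hP : ENNReal.ofReal (c ^ ((n : ℝ) - 1)) =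
      ENNReal.ofReal (c ^ (n + β)) * ENNReal.ofReal (c ^ (-1 - β)) := by
    rw [← ENNReal.ofReal_mul (by positivity), ← Real.rpow_add hc]
    ring_nf
  have hV : ENNReal.ofReal (c ^ (n + α)) =
      ENNReal.ofReal (c ^ (n + β)) * ENNReal.ofReal (c ^ (α - β)) := by
    rw [← ENNReal.ofReal_mul (by positivity), ← Real.rpow_add hc]
    ring_nf
  rw [scaledEnergy, perimeter_smul hc, rieszEnergy_smul hc, potEnergy_smul hc, hP, hV,
    scaledEnergy]
  ring

end EnergyScaling

/-! ### The Riesz energy -/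

section Riesz

variable {n : ℕ} {α : ℝ} {F D G H : Set (EuclideanSpace ℝ (Fin n))}

/-- The mass of the Riesz kernel in the unit ball. -/
def rieszLocalMass (n : ℕ) (α : ℝ) : ℝ≥0∞ :=
  ∫⁻ y in ball (0 : EuclideanSpace ℝ (Fin n)) 1, ENNReal.ofReal (‖y‖ ^ (α - n))

theorem rieszLocalMass_ne_top [NeZero n] (hα : 0 < α) : rieszLocalMass n α ≠ ∞ := by
  have hradial : IntegrableOn (fun t : ℝ => t ^ (n - 1) • t ^ (α - n)) (Set.Ioo 0 1) := by
    have hpow : IntegrableOn (fun t : ℝ => t ^ (α - 1)) (Set.Ioo 0 1) :=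
      (intervalIntegrable_iff_integrableOn_Ioo_of_le zero_le_one).1
        (intervalIntegral.intervalIntegrable_rpow' (by linarith))
    refine hpow.congr_fun (fun t ht => ?_) measurableSet_Ioo
    simp only [smul_eq_mul]
    rw [← Real.rpow_natCast, ← Real.rpow_add ht.1, Nat.cast_pred (NeZero.pos n)]
    congr 1
    ring
  have hint : IntegrableOn (fun x : EuclideanSpace ℝ (Fin n) => ‖x‖ ^ (α - n)) (ball 0 1) := by
    rw [integrableOn_fun_norm_addHaar volume (f := fun t : ℝ => t ^ (α - n)),
      finrank_euclideanSpace_fin]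
    exact hradial
  exact ((hasFiniteIntegral_iff_ofReal (Eventually.of_forall fun x => by positivity)).1 hint.2).ne

theorem setLIntegral_rieszKernel_le (hαn : α ≤ n) (G : Set (EuclideanSpace ℝ (Fin n)))
    (x : EuclideanSpace ℝ (Fin n)) :
    ∫⁻ y in G, ENNReal.ofReal (‖x - y‖ ^ (α - n)) ≤ rieszLocalMass n α + volume G := by
  have hball : ∫⁻ y in ball x 1, ENNReal.ofReal (‖x - y‖ ^ (α - n)) = rieszLocalMass n α := by
    have hpre : (x - ·) ⁻¹' ball 0 1 = ball x 1 := by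
      ext y
      simp [dist_eq_norm, norm_sub_rev]
    rw [← hpre]
    exact (Measure.measurePreserving_sub_left volume x).setLIntegral_comp_preimage_emb
      (Homeomorph.subLeft x).measurableEmbedding (fun y => ENNReal.ofReal (‖y‖ ^ (α - n))) _
  have hfar : ∫⁻ y in G \ ball x 1, ENNReal.ofReal (‖x - y‖ ^ (α - n)) ≤ volume G := by
    have hle (y) (hy : y ∈ (ball x 1)ᶜ) : ENNReal.ofReal (‖x - y‖ ^ (α - n)) ≤ 1 := by
      rw [Set.mem_compl_iff, mem_ball, not_lt, dist_comm, dist_eq_norm] at hy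
      exact ENNReal.ofReal_le_one.2 (Real.rpow_le_one_of_one_le_of_nonpos hy (by linarith))
    calc ∫⁻ y in G \ ball x 1, ENNReal.ofReal (‖x - y‖ ^ (α - n)) ≤ ∫⁻ _ in G \ ball x 1, 1 := by
          rw [Set.sdiff_eq, Set.inter_comm, ← Measure.restrict_restrict measurableSet_ball.compl]
          exact setLIntegral_mono' measurableSet_ball.compl hle
      _ ≤ volume G := by
          rw [setLIntegral_one]
          exact measure_mono Set.sdiff_subset
  rw [← lintegral_inter_add_sdiff _ G measurableSet_ball, ← hball]
  exact add_le_add (lintegral_mono_set Set.inter_subset_right) hfar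

theorem rieszEnergy_mono (h : G ⊆ H) : rieszEnergy α G ≤ rieszEnergy α H :=
  (lintegral_mono fun _ => lintegral_mono_set h).trans (lintegral_mono_set h)

theorem rieszEnergy_ne_top [NeZero n] (hα : 0 < α) (hαn : α ≤ n) (hG : volume G ≠ ∞) :
    rieszEnergy α G ≠ ∞ := by
  refine ne_top_of_le_ne_top ?_ (lintegral_mono fun x => setLIntegral_rieszKernel_le hαn G x)
  rw [setLIntegral_const]
  exact ENNReal.mul_ne_top (ENNReal.add_ne_top.2 ⟨rieszLocalMass_ne_top hα, hG⟩) hG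

theorem setLIntegral_setLIntegral_union_le {X : Type*} [MeasurableSpace X] {μ : Measure X}
    [SFinite μ] {k : X → X → ℝ≥0∞} (hk : Measurable (Function.uncurry k))
    (hsymm : ∀ x y, k x y = k y x) {R : ℝ≥0∞} (hR : ∀ S x, ∫⁻ y in S, k x y ∂μ ≤ R + μ S)
    {F D : Set X} (hD : MeasurableSet D) (hFD : Disjoint F D) :
    ∫⁻ x in F ∪ D, ∫⁻ y in F ∪ D, k x y ∂μ ∂μ ≤
      (∫⁻ x in F, ∫⁻ y in F, k x y ∂μ ∂μ) + μ D * (2 * R + 2 * μ F + μ D) := by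
  have hbound (S T : Set X) : ∫⁻ x in S, ∫⁻ y in T, k x y ∂μ ∂μ ≤ μ S * (R + μ T) :=
    calc ∫⁻ x in S, ∫⁻ y in T, k x y ∂μ ∂μ ≤ ∫⁻ _ in S, (R + μ T) ∂μ := lintegral_mono (hR T)
      _ = μ S * (R + μ T) := by rw [setLIntegral_const, mul_comm]
  have hcross : ∫⁻ x in F, ∫⁻ y in D, k x y ∂μ ∂μ = ∫⁻ x in D, ∫⁻ y in F, k x y ∂μ ∂μ := by
    rw [lintegral_lintegral_swap hk.aemeasurable]
    simp only [hsymm]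
  calc ∫⁻ x in F ∪ D, ∫⁻ y in F ∪ D, k x y ∂μ ∂μ
    _ = (∫⁻ x in F, ∫⁻ y in F, k x y ∂μ ∂μ) + (∫⁻ x in D, ∫⁻ y in F, k x y ∂μ ∂μ) +
          ∫⁻ x in D, ∫⁻ y in F ∪ D, k x y ∂μ ∂μ := by
        have hmeas : Measurable fun x => ∫⁻ y in F, k x y ∂μ := hk.lintegral_prod_right'
        rw [lintegral_union hD hFD, ← hcross, ← lintegral_add_left hmeas]
        simp only [lintegral_union hD hFD]
    _ ≤ (∫⁻ x in F, ∫⁻ y in F, k x y ∂μ ∂μ) + μ D * (R + μ F) + μ D * (R + (μ F + μ D)) := by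
        rw [← measure_union hFD hD]
        gcongr
        exacts [hbound D F, hbound D (F ∪ D)]
    _ = (∫⁻ x in F, ∫⁻ y in F, k x y ∂μ ∂μ) + μ D * (2 * R + 2 * μ F + μ D) := by ring

theorem rieszEnergy_union_le (hαn : α ≤ n) (hD : MeasurableSet D) (hFD : Disjoint F D) :
    rieszEnergy α (F ∪ D) ≤
      rieszEnergy α F + volume D * (2 * rieszLocalMass n α + 2 * volume F + volume D) :=
  setLIntegral_setLIntegral_union_le (by fun_prop) (fun x y => by rw [norm_sub_rev])
    (setLIntegral_rieszKernel_le hαn) hD hFD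

end Riesz

/-! ### The potential energy -/

section Potential

variable {n : ℕ} {β A r : ℝ} {F S : Set (EuclideanSpace ℝ (Fin n))}

theorem potEnergy_inter_add_sdiff (S : Set (EuclideanSpace ℝ (Fin n)))
    {T : Set (EuclideanSpace ℝ (Fin n))} (hT : MeasurableSet T) :
    potEnergy β A (S ∩ T) + potEnergy β A (S \ T) = potEnergy β A S :=
  lintegral_inter_add_sdiff _ S hT

theorem potEnergy_le_of_norm_le (hβ : 0 ≤ β) (hA : 0 ≤ A) (hS : ∀ x ∈ S, ‖x‖ ≤ r) :
    potEnergy β A S ≤ ENNReal.ofReal (A * r ^ β) * volume S := by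
  rw [← setLIntegral_const]
  refine setLIntegral_mono measurable_const fun x hx => ENNReal.ofReal_le_ofReal ?_
  have := hS x hx
  gcongr

theorem le_potEnergy_of_le_norm (hβ : 0 ≤ β) (hA : 0 ≤ A) (hr : 0 ≤ r) (hS : ∀ x ∈ S, r ≤ ‖x‖) :
    ENNReal.ofReal (A * r ^ β) * volume S ≤ potEnergy β A S := by
  rw [← setLIntegral_const]
  refine setLIntegral_mono (by fun_prop) fun x hx => ENNReal.ofReal_le_ofReal ?_
  have := hS x hx
  gcongr

theorem potEnergy_union_ball_le (hβ : 0 ≤ β) (hA : 0 ≤ A) (hF : MeasurableSet F) :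
    potEnergy β A (F ∪ ball 0 r) ≤
      potEnergy β A F + ENNReal.ofReal (A * r ^ β) * volume (ball 0 r \ F) := by
  rw [← potEnergy_inter_add_sdiff (F ∪ ball 0 r) hF, Set.union_inter_cancel_left,
    Set.union_sdiff_left]
  gcongr
  exact potEnergy_le_of_norm_le hβ hA fun x hx => (mem_ball_zero_iff.1 hx.1).le

theorem le_potEnergy_sdiff_closedBall (hβ : 0 ≤ β) (hA : 0 ≤ A) (hr : 0 ≤ r) :
    ENNReal.ofReal (A * r ^ β) * volume (F \ closedBall 0 r) ≤
      potEnergy β A (F \ closedBall 0 r) :=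
  le_potEnergy_of_le_norm hβ hA hr fun x hx => by
    simpa using (lt_of_not_ge fun h => hx.2 (mem_closedBall_zero_iff.2 h)).le

theorem potEnergy_inter_closedBall_add_le (hβ : 0 ≤ β) (hA : 0 ≤ A) (hr : 0 ≤ r) :
    potEnergy β A (F ∩ closedBall 0 r) +
      ENNReal.ofReal (A * r ^ β) * volume (F \ closedBall 0 r) ≤ potEnergy β A F := by
  rw [← potEnergy_inter_add_sdiff F measurableSet_closedBall]
  gcongr
  exact le_potEnergy_sdiff_closedBall hβ hA hr

theorem potEnergy_ball_ne_top (hβ : 0 ≤ β) (hA : 0 ≤ A) :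
    potEnergy β A (ball (0 : EuclideanSpace ℝ (Fin n)) r) ≠ ∞ :=
  ne_top_of_le_ne_top (ENNReal.mul_ne_top ENNReal.ofReal_ne_top measure_ball_lt_top.ne)
    (potEnergy_le_of_norm_le hβ hA fun _ hx => (mem_ball_zero_iff.1 hx).le)

theorem integral_Ioi_pow_smul_indicator_rpow [NeZero n] (hβ : 0 ≤ β) :
    ∫ t in Set.Ioi (0 : ℝ), t ^ (n - 1) • (Set.Iio 1).indicator (fun t => t ^ β) t =
      1 / (n + β) := by
  have hn : (0 : ℝ) < n := Nat.cast_pos.2 (NeZero.pos n)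
  have hpow : ∀ t ∈ Set.Ioi (0 : ℝ), t ^ (n - 1) • (Set.Iio 1).indicator (fun t => t ^ β) t =
      (Set.Iio 1).indicator (fun t => t ^ ((n : ℝ) - 1 + β)) t := fun t ht => by
    by_cases ht1 : t ∈ Set.Iio 1
    · rw [Set.indicator_of_mem ht1, Set.indicator_of_mem ht1, Real.rpow_add ht,
        ← Nat.cast_pred (NeZero.pos n), Real.rpow_natCast, smul_eq_mul]
    · rw [Set.indicator_of_notMem ht1, Set.indicator_of_notMem ht1, smul_zero]
  rw [setIntegral_congr_fun measurableSet_Ioi hpow, setIntegral_indicator measurableSet_Iio,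
    Set.Ioi_inter_Iio, ← integral_Ioc_eq_integral_Ioo,
    ← intervalIntegral.integral_of_le zero_le_one, integral_rpow (Or.inl (by linarith)),
    Real.one_rpow, Real.zero_rpow (by linarith)]
  ring_nf

theorem potEnergy_ball [NeZero n] (hβ : 0 ≤ β) (hA : 0 ≤ A) :
    ENNReal.ofReal ((n + β) / n) * potEnergy β A (ball (0 : EuclideanSpace ℝ (Fin n)) 1) =
      ENNReal.ofReal A * volume (ball (0 : EuclideanSpace ℝ (Fin n)) 1) := by
  have hn : (0 : ℝ) < n := Nat.cast_pos.2 (NeZero.pos n)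
  have hradial : ∫ x in ball (0 : EuclideanSpace ℝ (Fin n)) 1, ‖x‖ ^ β =
      n * volume.real (ball (0 : EuclideanSpace ℝ (Fin n)) 1) / (n + β) := by
    have hind : (ball (0 : EuclideanSpace ℝ (Fin n)) 1).indicator (fun x => ‖x‖ ^ β) =
        fun x => (Set.Iio 1).indicator (fun t => t ^ β) ‖x‖ := by
      ext x
      simp [Set.indicator]
    rw [← integral_indicator measurableSet_ball, hind, integral_fun_norm_addHaar,
      finrank_euclideanSpace_fin, integral_Ioi_pow_smul_indicator_rpow hβ]
    simp
    ring
  have hU : potEnergy β A (ball (0 : EuclideanSpace ℝ (Fin n)) 1) =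
      ENNReal.ofReal (A * (n * volume.real (ball (0 : EuclideanSpace ℝ (Fin n)) 1) / (n + β))) := by
    rw [potEnergy, ← hradial, ← integral_const_mul, ofReal_integral_eq_lintegral_ofReal]
    · have hcont : Continuous fun x : EuclideanSpace ℝ (Fin n) => A * ‖x‖ ^ β :=
        (continuous_norm.rpow_const fun _ => Or.inr hβ).const_mul A
      exact (hcont.locallyIntegrable.integrableOn_isCompact (isCompact_closedBall 0 1)).mono_set
        ball_subset_closedBall
    · exact Eventually.of_forall fun x => by positivity
  rw [hU, ← ENNReal.ofReal_mul (by positivity), ← ofReal_measureReal, ← ENNReal.ofReal_mul hA]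
  congr 1
  field_simp

theorem potEnergy_add_volume_inter_ball_le (hβ : 0 ≤ β) (hA : 0 ≤ A) (hr : 0 ≤ r) (hr1 : r ≤ 1)
    (hS : S ⊆ ball 0 1) :
    potEnergy β A S + ENNReal.ofReal (A * (1 - r ^ β)) * volume (S ∩ ball 0 r) ≤
      ENNReal.ofReal A * volume S := by
  have hnear : potEnergy β A (S ∩ ball 0 r) ≤ ENNReal.ofReal (A * r ^ β) * volume (S ∩ ball 0 r) :=
    potEnergy_le_of_norm_le hβ hA fun x hx => (mem_ball_zero_iff.1 hx.2).le
  have hfar : potEnergy β A (S \ ball 0 r) ≤ ENNReal.ofReal (A * 1 ^ β) * volume (S \ ball 0 r) :=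
    potEnergy_le_of_norm_le hβ hA fun x hx => (mem_ball_zero_iff.1 (hS hx.1)).le
  have hsum : ENNReal.ofReal (A * r ^ β) + ENNReal.ofReal (A * (1 - r ^ β)) = ENNReal.ofReal A := by
    have := Real.rpow_le_one hr hr1 hβ
    rw [← ENNReal.ofReal_add (by positivity) (mul_nonneg hA (by linarith))]
    ring_nf
  rw [Real.one_rpow, mul_one] at hfar
  calc potEnergy β A S + ENNReal.ofReal (A * (1 - r ^ β)) * volume (S ∩ ball 0 r)
    _ = potEnergy β A (S ∩ ball 0 r) + ENNReal.ofReal (A * (1 - r ^ β)) * volume (S ∩ ball 0 r) +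
          potEnergy β A (S \ ball 0 r) := by
        rw [← potEnergy_inter_add_sdiff S measurableSet_ball, add_right_comm]
    _ ≤ ENNReal.ofReal (A * r ^ β) * volume (S ∩ ball 0 r) +
          ENNReal.ofReal (A * (1 - r ^ β)) * volume (S ∩ ball 0 r) +
          ENNReal.ofReal A * volume (S \ ball 0 r) := by gcongr
    _ = ENNReal.ofReal A * volume S := by
        rw [← add_mul, hsum, ← mul_add, measure_inter_add_sdiff S measurableSet_ball]

theorem volume_add_volume_sdiff_closedBall_le (hβ : 0 ≤ β) (hA : 0 ≤ A) (hr : 1 ≤ r)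
    (hS : Disjoint S (ball 0 1)) :
    ENNReal.ofReal A * volume S + ENNReal.ofReal (A * (r ^ β - 1)) * volume (S \ closedBall 0 r) ≤
      potEnergy β A S := by
  have hnear : ENNReal.ofReal (A * 1 ^ β) * volume (S ∩ closedBall 0 r) ≤
      potEnergy β A (S ∩ closedBall 0 r) :=
    le_potEnergy_of_le_norm hβ hA zero_le_one fun x hx => by
      simpa using Set.disjoint_left.1 hS hx.1
  have hfar : ENNReal.ofReal (A * r ^ β) * volume (S \ closedBall 0 r) ≤
      potEnergy β A (S \ closedBall 0 r) :=
    le_potEnergy_sdiff_closedBall hβ hA (by linarith)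
  have hsum : ENNReal.ofReal A + ENNReal.ofReal (A * (r ^ β - 1)) = ENNReal.ofReal (A * r ^ β) := by
    have := Real.one_le_rpow hr hβ
    rw [← ENNReal.ofReal_add hA (mul_nonneg hA (by linarith))]
    ring_nf
  rw [Real.one_rpow, mul_one] at hnear
  calc ENNReal.ofReal A * volume S +
        ENNReal.ofReal (A * (r ^ β - 1)) * volume (S \ closedBall 0 r)
    _ = ENNReal.ofReal A * volume (S ∩ closedBall 0 r) +
          ENNReal.ofReal (A * r ^ β) * volume (S \ closedBall 0 r) := by
        rw [← hsum, ← measure_inter_add_sdiff S measurableSet_closedBall]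
        ring
    _ ≤ potEnergy β A S := by
        rw [← potEnergy_inter_add_sdiff S measurableSet_closedBall]
        exact add_le_add hnear hfar

theorem potEnergy_add_potEnergy_sdiff_comm {T : Set (EuclideanSpace ℝ (Fin n))}
    (hS : MeasurableSet S) (hT : MeasurableSet T) :
    potEnergy β A S + potEnergy β A (T \ S) = potEnergy β A T + potEnergy β A (S \ T) := by
  rw [← potEnergy_inter_add_sdiff S hT, ← potEnergy_inter_add_sdiff T hS, Set.inter_comm,
    add_right_comm]

/- Passing from `F` to the ball exchanges `F \ B` for the equal volume `B \ F`, that is, a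
potential at least `A` for a potential at most `A`. -/
theorem potEnergy_ball_add_volume_sdiff_le (hβ : 0 ≤ β) (hA : 0 ≤ A) (hF : MeasurableSet F)
    (hV : volume F = volume (ball (0 : EuclideanSpace ℝ (Fin n)) 1)) {R : ℝ}
    (hr : 0 ≤ r) (hr1 : r ≤ 1) (hR : 1 ≤ R) :
    potEnergy β A (ball (0 : EuclideanSpace ℝ (Fin n)) 1) +
        ENNReal.ofReal (A * (1 - r ^ β)) * volume (ball 0 r \ F) +
        ENNReal.ofReal (A * (R ^ β - 1)) * volume (F \ closedBall 0 R) ≤ potEnergy β A F := by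
  set B := ball (0 : EuclideanSpace ℝ (Fin n)) 1
  have hvol : volume (B \ F) = volume (F \ B) :=
    measure_sdiff_symm measurableSet_ball.nullMeasurableSet hF.nullMeasurableSet hV.symm
      (measure_ne_top_of_subset Set.inter_subset_left measure_ball_lt_top.ne)
  have hin := potEnergy_add_volume_inter_ball_le hβ hA hr hr1 (Set.sdiff_subset : B \ F ⊆ B)
  have hout := volume_add_volume_sdiff_closedBall_le hβ hA hR
    (Set.disjoint_sdiff_left : Disjoint (F \ B) B)
  have hBr : (B \ F) ∩ ball 0 r = ball 0 r \ F := by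
    rw [Set.sdiff_inter_right_comm, Set.inter_eq_right.2 (ball_subset_ball hr1)]
  have hBR : (F \ B) \ closedBall 0 R = F \ closedBall 0 R := by
    rw [Set.sdiff_sdiff, Set.union_eq_right.2
      (ball_subset_closedBall.trans (closedBall_subset_closedBall hR))]
  rw [hBr] at hin
  rw [hBR] at hout
  have hfin : potEnergy β A (B \ F) ≠ ∞ :=
    ne_top_of_le_ne_top (potEnergy_ball_ne_top hβ hA) (lintegral_mono_set Set.sdiff_subset)
  refine (ENNReal.add_le_add_iff_right hfin).1 ?_
  rw [potEnergy_add_potEnergy_sdiff_comm hF measurableSet_ball]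
  calc _ = potEnergy β A B + (potEnergy β A (B \ F) +
          ENNReal.ofReal (A * (1 - r ^ β)) * volume (ball 0 r \ F)) +
          ENNReal.ofReal (A * (R ^ β - 1)) * volume (F \ closedBall 0 R) := by ring
    _ ≤ potEnergy β A B + ENNReal.ofReal A * volume (F \ B) +
          ENNReal.ofReal (A * (R ^ β - 1)) * volume (F \ closedBall 0 R) := by
        rw [← hvol]
        gcongr
    _ ≤ potEnergy β A B + potEnergy β A (F \ B) := by
        rw [add_assoc]
        gcongr

theorem potEnergy_ball_le (hβ : 0 ≤ β) (hA : 0 ≤ A) (hF : MeasurableSet F)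
    (hV : volume F = volume (ball (0 : EuclideanSpace ℝ (Fin n)) 1)) :
    potEnergy β A (ball (0 : EuclideanSpace ℝ (Fin n)) 1) ≤ potEnergy β A F :=
  le_self_add.trans (le_self_add.trans
    (potEnergy_ball_add_volume_sdiff_le hβ hA hF hV zero_le_one le_rfl le_rfl))

end Potential

/-! ### Rescaled minimizers -/

section ScaledMinimizer

variable {n : ℕ} {α β A : ℝ} {δ ε : ℝ≥0∞} {F G : Set (EuclideanSpace ℝ (Fin n))}

/-- `F` minimizes `scaledEnergy` among the measurable sets with the volume of the unit ball. -/
structure IsScaledMinimizer (α β A : ℝ) (δ ε : ℝ≥0∞) (F : Set (EuclideanSpace ℝ (Fin n))) :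
    Prop where
  measurableSet : MeasurableSet F
  volume_eq : volume F = volume (ball (0 : EuclideanSpace ℝ (Fin n)) 1)
  scaledEnergy_le : ∀ G : Set (EuclideanSpace ℝ (Fin n)), MeasurableSet G →
    volume G = volume (ball (0 : EuclideanSpace ℝ (Fin n)) 1) →
    scaledEnergy α β A δ ε F ≤ scaledEnergy α β A δ ε G

theorem IsMinimizer.isScaledMinimizer [NeZero n] {c m : ℝ} (hc : 0 < c)
    (hm : ENNReal.ofReal m =
      ENNReal.ofReal (c ^ n) * volume (ball (0 : EuclideanSpace ℝ (Fin n)) 1))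
    (hF : IsMinimizer α β A m F) :
    IsScaledMinimizer α β A (ENNReal.ofReal (c ^ (-1 - β))) (ENNReal.ofReal (c ^ (α - β)))
      (c⁻¹ • F) := by
  obtain ⟨hmeas, hvol, hmin⟩ := hF
  have hscale (G : Set (EuclideanSpace ℝ (Fin n))) : totalEnergy α β A (c • G) =
      ENNReal.ofReal (c ^ (n + β)) * scaledEnergy α β A (ENNReal.ofReal (c ^ (-1 - β)))
        (ENNReal.ofReal (c ^ (α - β))) G := by
    rw [← scaledEnergy_one_one, scaledEnergy_smul hc, one_mul, one_mul]
  have hpos : ENNReal.ofReal (c ^ (n + β)) ≠ 0 := (ENNReal.ofReal_pos.2 (by positivity)).ne'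
  refine ⟨hmeas.const_smul₀ c⁻¹, ?_, fun G hG hGvol => ?_⟩
  · rw [volume_smul (inv_pos.2 hc), hvol, hm, ← mul_assoc, ← ENNReal.ofReal_mul (by positivity),
      ← mul_pow, inv_mul_cancel₀ hc.ne', one_pow, ENNReal.ofReal_one, one_mul]
  · have hle := hmin (c • G) (hG.const_smul₀ c) (by rw [volume_smul hc, hGvol, hm])
    rw [hscale, ← smul_inv_smul₀ hc.ne' F, hscale] at hle
    exact (ENNReal.mul_le_mul_iff_right hpos ENNReal.ofReal_ne_top).1 hle

theorem IsScaledMinimizer.mul_scaledEnergy_le [NeZero n] (h : IsScaledMinimizer α β A δ ε F)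
    {c : ℝ} (hc : 0 < c) (hG : MeasurableSet G)
    (hvol : volume G = ENNReal.ofReal (c ^ n) * volume (ball (0 : EuclideanSpace ℝ (Fin n)) 1)) :
    ENNReal.ofReal (c ^ (n + β)) * scaledEnergy α β A δ ε F ≤
      scaledEnergy α β A (δ * ENNReal.ofReal (c ^ (1 + β)))
        (ε * ENNReal.ofReal (c ^ (β - α))) G := by
  have hle := h.scaledEnergy_le (c⁻¹ • G) (hG.const_smul₀ c⁻¹) (by
    rw [volume_smul (inv_pos.2 hc), hvol, ← mul_assoc, ← ENNReal.ofReal_mul (by positivity),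
      ← mul_pow, inv_mul_cancel₀ hc.ne', one_pow, ENNReal.ofReal_one, one_mul])
  rw [scaledEnergy_smul (inv_pos.2 hc)] at hle
  simp only [Real.inv_rpow hc.le, ← Real.rpow_neg hc.le, neg_sub, sub_neg_eq_add, add_comm β] at hle
  calc ENNReal.ofReal (c ^ (n + β)) * scaledEnergy α β A δ ε F
    _ ≤ ENNReal.ofReal (c ^ (n + β)) * (ENNReal.ofReal (c ^ (-(n + β))) * scaledEnergy α β A
          (δ * ENNReal.ofReal (c ^ (1 + β))) (ε * ENNReal.ofReal (c ^ (β - α))) G) := by gcongr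
    _ = scaledEnergy α β A (δ * ENNReal.ofReal (c ^ (1 + β)))
          (ε * ENNReal.ofReal (c ^ (β - α))) G := by
        rw [← mul_assoc, ← ENNReal.ofReal_mul (by positivity), ← Real.rpow_add hc, add_neg_cancel,
          Real.rpow_zero, ENNReal.ofReal_one, one_mul]

theorem IsScaledMinimizer.scaledEnergy_le_ball (h : IsScaledMinimizer α β A δ ε F) :
    scaledEnergy α β A δ ε F ≤
      scaledEnergy α β A δ ε (ball (0 : EuclideanSpace ℝ (Fin n)) 1) :=
  h.scaledEnergy_le _ measurableSet_ball rfl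

theorem perimeter_ne_top_of_scaledEnergy_ne_top (hδ : δ ≠ 0)
    (h : scaledEnergy α β A δ ε F ≠ ∞) : perimeter F ≠ ∞ := by
  intro hP
  simp [scaledEnergy, hP, ENNReal.mul_top hδ] at h

theorem rpow_natCast_add_eq_pow_rpow [NeZero n] {c : ℝ} (hc : 0 ≤ c) :
    c ^ (n + β) = (c ^ n) ^ ((n + β) / n) := by
  rw [← Real.rpow_natCast, ← Real.rpow_mul hc, mul_div_cancel₀ _ (NeZero.ne (n : ℝ))]

theorem one_add_mul_pow_sub_one_le_rpow [NeZero n] (hβ : 0 ≤ β) {c : ℝ} (hc : 0 < c) :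
    1 + (n + β) / n * (c ^ n - 1) ≤ c ^ (n + β) := by
  have hn : (0 : ℝ) < n := Nat.cast_pos.2 (NeZero.pos n)
  have hs : 1 ≤ (n + β) / n := (one_le_div hn).2 (by linarith)
  have := one_add_mul_self_le_rpow_one_add (s := c ^ n - 1) (by linarith [pow_pos hc n]) hs
  rwa [add_sub_cancel, ← rpow_natCast_add_eq_pow_rpow hc.le] at this

end ScaledMinimizer

section BallRadius

variable {n : ℕ} {m : ℝ}

/-- The radius of the balls of `EuclideanSpace ℝ (Fin n)` with volume `m`. -/
def ballRadius (n : ℕ) (m : ℝ) : ℝ :=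
  (m / (volume (ball (0 : EuclideanSpace ℝ (Fin n)) 1)).toReal) ^ (1 / (n : ℝ))

theorem ballRadius_pos (hm : 0 < m) : 0 < ballRadius n m := by
  have := toReal_volume_ball_pos (0 : EuclideanSpace ℝ (Fin n)) one_pos
  exact Real.rpow_pos_of_pos (by positivity) _

theorem inv_ballRadius (hm : 0 ≤ m) : (ballRadius n m)⁻¹ =
    ((volume (ball (0 : EuclideanSpace ℝ (Fin n)) 1)).toReal / m) ^ (1 / (n : ℝ)) := by
  rw [ballRadius, ← Real.inv_rpow (by positivity), inv_div]

theorem ofReal_ballRadius_pow_mul_volume_ball [NeZero n] (hm : 0 ≤ m) :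
    ENNReal.ofReal (ballRadius n m ^ n) * volume (ball (0 : EuclideanSpace ℝ (Fin n)) 1) =
      ENNReal.ofReal m := by
  have hB := toReal_volume_ball_pos (0 : EuclideanSpace ℝ (Fin n)) one_pos
  rw [ballRadius, one_div, Real.rpow_inv_natCast_pow (by positivity) (NeZero.ne n),
    ENNReal.ofReal_div_of_pos hB, ENNReal.ofReal_toReal measure_ball_lt_top.ne,
    ENNReal.div_mul_cancel (measure_ball_pos _ _ one_pos).ne' measure_ball_lt_top.ne]

theorem tendsto_ballRadius_atTop [NeZero n] : Tendsto (ballRadius n) atTop atTop :=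
  (tendsto_rpow_atTop (one_div_pos.2 (Nat.cast_pos.2 (NeZero.pos n)))).comp
    (tendsto_id.atTop_div_const (toReal_volume_ball_pos _ one_pos))

theorem tendsto_ofReal_ballRadius_rpow [NeZero n] {s : ℝ} (hs : s < 0) :
    Tendsto (fun m => ENNReal.ofReal (ballRadius n m ^ s)) atTop (𝓝 0) := by
  have hpow := (tendsto_rpow_neg_atTop (neg_pos.2 hs)).comp (tendsto_ballRadius_atTop (n := n))
  simpa only [Function.comp_def, neg_neg, ENNReal.ofReal_zero] using ENNReal.tendsto_ofReal hpow

theorem exists_volume_eq_ofReal_pow_mul_volume_ball [NeZero n]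
    {G : Set (EuclideanSpace ℝ (Fin n))} (hG0 : volume G ≠ 0) (hG : volume G ≠ ∞) :
    ∃ c : ℝ, 0 < c ∧
      volume G = ENNReal.ofReal (c ^ n) * volume (ball (0 : EuclideanSpace ℝ (Fin n)) 1) :=
  ⟨ballRadius n (volume G).toReal, ballRadius_pos (ENNReal.toReal_pos hG0 hG), by
    rw [ofReal_ballRadius_pow_mul_volume_ball ENNReal.toReal_nonneg, ENNReal.ofReal_toReal hG]⟩

end BallRadius

section Comparison

variable {n : ℕ} {α β A r c : ℝ} {δ ε : ℝ≥0∞} {F : Set (EuclideanSpace ℝ (Fin n))}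

theorem mul_volume_ball_le_mul_volume_ball_iff {a b : ℝ≥0∞} :
    a * volume (ball (0 : EuclideanSpace ℝ (Fin n)) 1) ≤
      b * volume (ball (0 : EuclideanSpace ℝ (Fin n)) 1) ↔ a ≤ b :=
  ENNReal.mul_le_mul_iff_left (measure_ball_pos _ _ one_pos).ne' measure_ball_lt_top.ne

theorem volume_ball_add_mul_volume_le [NeZero n] (hβ : 0 ≤ β) (hc : 0 < c)
    {G : Set (EuclideanSpace ℝ (Fin n))}
    (hG : volume G = ENNReal.ofReal (c ^ n) * volume (ball (0 : EuclideanSpace ℝ (Fin n)) 1)) :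
    volume (ball (0 : EuclideanSpace ℝ (Fin n)) 1) + ENNReal.ofReal ((n + β) / n) * volume G ≤
      ENNReal.ofReal (c ^ (n + β)) * volume (ball (0 : EuclideanSpace ℝ (Fin n)) 1) +
        ENNReal.ofReal ((n + β) / n) * volume (ball (0 : EuclideanSpace ℝ (Fin n)) 1) := by
  have hbern : 1 + ENNReal.ofReal ((n + β) / n) * ENNReal.ofReal (c ^ n) ≤
      ENNReal.ofReal (c ^ (n + β)) + ENNReal.ofReal ((n + β) / n) := by
    rw [← ENNReal.ofReal_one, ← ENNReal.ofReal_mul (by positivity),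
      ← ENNReal.ofReal_add zero_le_one (by positivity),
      ← ENNReal.ofReal_add (by positivity) (by positivity)]
    exact ENNReal.ofReal_le_ofReal (by linarith [one_add_mul_pow_sub_one_le_rpow (n := n) hβ hc])
  rw [hG, ← mul_assoc, ← add_mul, ← one_add_mul]
  gcongr

theorem exists_volume_eq_of_volume_eq_ball_add [NeZero n] (hβ : 0 ≤ β)
    {G : Set (EuclideanSpace ℝ (Fin n))} {v : ℝ≥0∞}
    (hG : volume G = volume (ball (0 : EuclideanSpace ℝ (Fin n)) 1) + v)
    (hv : v ≤ volume (ball (0 : EuclideanSpace ℝ (Fin n)) 1)) :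
    ∃ c : ℝ, 1 ≤ c ∧
      volume G = ENNReal.ofReal (c ^ n) * volume (ball (0 : EuclideanSpace ℝ (Fin n)) 1) ∧
      ENNReal.ofReal (c ^ (n + β)) ≤ ENNReal.ofReal (2 ^ ((n + β) / n)) ∧
      volume (ball (0 : EuclideanSpace ℝ (Fin n)) 1) + ENNReal.ofReal ((n + β) / n) * v ≤
        ENNReal.ofReal (c ^ (n + β)) * volume (ball (0 : EuclideanSpace ℝ (Fin n)) 1) := by
  set B := ball (0 : EuclideanSpace ℝ (Fin n)) 1
  have hB : volume B ≠ ∞ := measure_ball_lt_top.ne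
  obtain ⟨c, hc, hvol⟩ := exists_volume_eq_ofReal_pow_mul_volume_ball (G := G)
    (hG ▸ (add_pos_of_pos_of_nonneg (measure_ball_pos _ _ one_pos) zero_le).ne')
    (hG ▸ ENNReal.add_ne_top.2 ⟨hB, ne_top_of_le_ne_top hB hv⟩)
  have hc1 : 1 ≤ c := by
    rw [← one_le_pow_iff_of_nonneg hc.le (NeZero.ne n), ← ENNReal.one_le_ofReal,
      ← mul_volume_ball_le_mul_volume_ball_iff (n := n), ← hvol, hG, one_mul]
    exact le_self_add
  have hc2 : ENNReal.ofReal (c ^ n) ≤ ENNReal.ofReal 2 := by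
    rw [← mul_volume_ball_le_mul_volume_ball_iff (n := n), ← hvol, hG, ENNReal.ofReal_ofNat,
      two_mul]
    gcongr
  refine ⟨c, hc1, hvol, ?_, ?_⟩
  · rw [rpow_natCast_add_eq_pow_rpow hc.le]
    gcongr
    exact (ENNReal.ofReal_le_ofReal_iff zero_le_two).1 hc2
  · have hle := volume_ball_add_mul_volume_le hβ hc hvol
    rw [hG, mul_add, add_comm (_ * volume B), ← add_assoc] at hle
    exact (ENNReal.add_le_add_iff_right (ENNReal.mul_ne_top ENNReal.ofReal_ne_top hB)).1 hle

theorem exists_volume_eq_of_volume_add_eq_ball [NeZero n] (hβ : 0 ≤ β)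
    {G : Set (EuclideanSpace ℝ (Fin n))} {v : ℝ≥0∞}
    (hG : volume G + v = volume (ball (0 : EuclideanSpace ℝ (Fin n)) 1))
    (hv : v < volume (ball (0 : EuclideanSpace ℝ (Fin n)) 1)) :
    ∃ c : ℝ, 0 < c ∧ c ≤ 1 ∧
      volume G = ENNReal.ofReal (c ^ n) * volume (ball (0 : EuclideanSpace ℝ (Fin n)) 1) ∧
      volume (ball (0 : EuclideanSpace ℝ (Fin n)) 1) ≤
        ENNReal.ofReal (c ^ (n + β)) * volume (ball (0 : EuclideanSpace ℝ (Fin n)) 1) +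
          ENNReal.ofReal ((n + β) / n) * v := by
  set B := ball (0 : EuclideanSpace ℝ (Fin n)) 1
  have hGB : volume G ≤ volume B := hG ▸ le_self_add
  have hGtop : volume G ≠ ∞ := (hGB.trans_lt measure_ball_lt_top).ne
  obtain ⟨c, hc, hvol⟩ := exists_volume_eq_ofReal_pow_mul_volume_ball (G := G)
    (fun h0 => hv.ne (by rwa [h0, zero_add] at hG)) hGtop
  have hc1 : c ≤ 1 := by
    rw [← pow_le_one_iff_of_nonneg hc.le (NeZero.ne n), ← ENNReal.ofReal_le_one,
      ← mul_volume_ball_le_mul_volume_ball_iff (n := n), ← hvol, one_mul]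
    exact hGB
  have hfin : ENNReal.ofReal ((n + β) / n) * volume G ≠ ∞ :=
    ENNReal.mul_ne_top ENNReal.ofReal_ne_top hGtop
  refine ⟨c, hc, hc1, hvol, (ENNReal.add_le_add_iff_left hfin).1 ?_⟩
  calc ENNReal.ofReal ((n + β) / n) * volume G + volume B
    _ ≤ ENNReal.ofReal (c ^ (n + β)) * volume B + ENNReal.ofReal ((n + β) / n) * volume B := by
        rw [add_comm]
        exact volume_ball_add_mul_volume_le hβ hc hvol
    _ = _ := by
        rw [← hG]
        ring

theorem IsScaledMinimizer.mul_potEnergy_le [NeZero n] (hα : 0 < α) (hαn : α ≤ n)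
    (hβ : 0 ≤ β) (hA : 0 ≤ A) (h : IsScaledMinimizer α β A δ ε F)
    (hfin : scaledEnergy α β A δ ε F ≠ ∞) (hc : 1 ≤ c)
    (hr : volume (ball (0 : EuclideanSpace ℝ (Fin n)) r \ F) ≤
      volume (ball (0 : EuclideanSpace ℝ (Fin n)) 1))
    (hvol : volume (F ∪ ball 0 r) =
      ENNReal.ofReal (c ^ n) * volume (ball (0 : EuclideanSpace ℝ (Fin n)) 1))
    (hP : perimeter (F ∪ ball 0 r) ≤ perimeter F) :
    ENNReal.ofReal (c ^ (n + β)) * potEnergy β A F ≤ potEnergy β A F +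
      (ENNReal.ofReal (c ^ (n + β)) * ε * (2 * rieszLocalMass n α +
        3 * volume (ball (0 : EuclideanSpace ℝ (Fin n)) 1)) + ENNReal.ofReal (A * r ^ β)) *
          volume (ball 0 r \ F) := by
  set B := ball (0 : EuclideanSpace ℝ (Fin n)) 1
  set S := ENNReal.ofReal (c ^ (n + β))
  set D := ball (0 : EuclideanSpace ℝ (Fin n)) r \ F
  have hn : (1 : ℝ) ≤ n := Nat.one_le_cast.2 (NeZero.one_le)
  have hV : rieszEnergy α (F ∪ ball 0 r) ≤
      rieszEnergy α F + volume D * (2 * rieszLocalMass n α + 3 * volume B) := by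
    rw [← Set.union_sdiff_self]
    refine (rieszEnergy_union_le hαn (measurableSet_ball.diff h.measurableSet)
      Set.disjoint_sdiff_right).trans ?_
    rw [h.volume_eq, show (3 : ℝ≥0∞) = 2 + 1 by norm_num, add_mul, one_mul, ← add_assoc]
    gcongr
  have hcomp := h.mul_scaledEnergy_le (zero_lt_one.trans_le hc)
    (h.measurableSet.union measurableSet_ball) hvol
  have hδS : ENNReal.ofReal (c ^ (1 + β)) ≤ S :=
    ENNReal.ofReal_le_ofReal (Real.rpow_le_rpow_of_exponent_le hc (by linarith))
  have hεS : ENNReal.ofReal (c ^ (β - α)) ≤ S :=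
    ENNReal.ofReal_le_ofReal (Real.rpow_le_rpow_of_exponent_le hc (by linarith))
  have hfinS : S * (δ * perimeter F + ε * rieszEnergy α F) ≠ ∞ :=
    ENNReal.mul_ne_top ENNReal.ofReal_ne_top (ENNReal.add_ne_top.1 hfin).1
  refine (ENNReal.add_le_add_iff_left hfinS).1 ?_
  calc S * (δ * perimeter F + ε * rieszEnergy α F) + S * potEnergy β A F
    _ ≤ scaledEnergy α β A (δ * ENNReal.ofReal (c ^ (1 + β)))
          (ε * ENNReal.ofReal (c ^ (β - α))) (F ∪ ball 0 r) := by rwa [← mul_add]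
    _ ≤ δ * S * perimeter F +
          ε * S * (rieszEnergy α F + volume D * (2 * rieszLocalMass n α + 3 * volume B)) +
          (potEnergy β A F + ENNReal.ofReal (A * r ^ β) * volume D) := by
        unfold scaledEnergy
        gcongr
        exact potEnergy_union_ball_le hβ hA h.measurableSet
    _ = _ := by ring

/- Adding `ball 0 r \ F` multiplies the volume by `1 + t`, so rescaling back gains at least
`(n + β) / n * t * U(F)`, and `(n + β) / n * U(F) ≥ (n + β) / n * U(B) = A|B|`. The added part
costs only `A * r ^ β * t * |B|`, up to a multiple of `ε`. -/
theorem IsScaledMinimizer.perimeter_le_perimeter_union_ball [NeZero n] (hα : 0 < α) (hαn : α ≤ n)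
    (hβ : 0 ≤ β) (hA : 0 ≤ A) (h : IsScaledMinimizer α β A δ ε F)
    (hfin : scaledEnergy α β A δ ε F ≠ ∞) (hr1 : r ≤ 1)
    (hsmall : ENNReal.ofReal (2 ^ ((n + β) / n)) * ε * (2 * rieszLocalMass n α +
      3 * volume (ball (0 : EuclideanSpace ℝ (Fin n)) 1)) + ENNReal.ofReal (A * r ^ β) <
        ENNReal.ofReal A)
    (hD : volume (ball 0 r \ F) ≠ 0) : perimeter F ≤ perimeter (F ∪ ball 0 r) := by
  set B := ball (0 : EuclideanSpace ℝ (Fin n)) 1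
  set D := ball (0 : EuclideanSpace ℝ (Fin n)) r \ F
  have hDB : volume D ≤ volume B := measure_mono (Set.sdiff_subset.trans (ball_subset_ball hr1))
  have hDtop : volume D ≠ ∞ := (hDB.trans_lt measure_ball_lt_top).ne
  have hG : volume (F ∪ ball 0 r) = volume B + volume D := by
    rw [← Set.union_sdiff_self, measure_union Set.disjoint_sdiff_right
      (measurableSet_ball.diff h.measurableSet), h.volume_eq]
  by_contra! hP
  obtain ⟨c, hc1, hvol, hS, hbern⟩ := exists_volume_eq_of_volume_eq_ball_add hβ hG hDB
  have hcomp := h.mul_potEnergy_le hα hαn hβ hA hfin hc1 hDB hvol hP.le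
  set C := 2 * rieszLocalMass n α + 3 * volume B
  set U := potEnergy β A F
  have hU : U ≠ ∞ := (ENNReal.add_ne_top.1 hfin).2
  have hgain : U * volume B + volume D * (ENNReal.ofReal ((n + β) / n) * U) ≤ U * volume B +
      volume D * ((ENNReal.ofReal (2 ^ ((n + β) / n)) * ε * C + ENNReal.ofReal (A * r ^ β)) *
        volume B) :=
    calc U * volume B + volume D * (ENNReal.ofReal ((n + β) / n) * U)
      _ = (volume B + ENNReal.ofReal ((n + β) / n) * volume D) * U := by ring
      _ ≤ ENNReal.ofReal (c ^ (n + β)) * volume B * U := by gcongr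
      _ = ENNReal.ofReal (c ^ (n + β)) * U * volume B := by ring
      _ ≤ (U + (ENNReal.ofReal (2 ^ ((n + β) / n)) * ε * C + ENNReal.ofReal (A * r ^ β)) *
            volume D) * volume B := by
          gcongr
          exact hcomp.trans (by gcongr)
      _ = _ := by ring
  have hcancel := (ENNReal.mul_le_mul_iff_right hD hDtop).1
    ((ENNReal.add_le_add_iff_left (ENNReal.mul_ne_top hU measure_ball_lt_top.ne)).1 hgain)
  refine hsmall.not_ge ((mul_volume_ball_le_mul_volume_ball_iff (n := n)).1 ?_)
  calc ENNReal.ofReal A * volume B = ENNReal.ofReal ((n + β) / n) * potEnergy β A B :=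
        (potEnergy_ball hβ hA).symm
    _ ≤ ENNReal.ofReal ((n + β) / n) * U := by
        gcongr
        exact potEnergy_ball_le hβ hA h.measurableSet h.volume_eq
    _ ≤ _ := hcancel

theorem IsScaledMinimizer.mul_scaledEnergy_add_le [NeZero n] (hαβ : α ≤ β)
    (hβ : 0 ≤ β) (hA : 0 ≤ A) (h : IsScaledMinimizer α β A δ ε F) (hr : 0 ≤ r) (hc : 0 < c)
    (hc1 : c ≤ 1)
    (hvol : volume (F ∩ closedBall 0 r) =
      ENNReal.ofReal (c ^ n) * volume (ball (0 : EuclideanSpace ℝ (Fin n)) 1))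
    (hP : perimeter (F ∩ closedBall 0 r) ≤ perimeter F) :
    ENNReal.ofReal (c ^ (n + β)) * scaledEnergy α β A δ ε F +
        ENNReal.ofReal (A * r ^ β) * volume (F \ closedBall 0 r) ≤
      scaledEnergy α β A δ ε F := by
  have hδ1 : ENNReal.ofReal (c ^ (1 + β)) ≤ 1 :=
    ENNReal.ofReal_le_one.2 (Real.rpow_le_one hc.le hc1 (by linarith))
  have hε1 : ENNReal.ofReal (c ^ (β - α)) ≤ 1 :=
    ENNReal.ofReal_le_one.2 (Real.rpow_le_one hc.le hc1 (by linarith))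
  calc ENNReal.ofReal (c ^ (n + β)) * scaledEnergy α β A δ ε F +
        ENNReal.ofReal (A * r ^ β) * volume (F \ closedBall 0 r)
    _ ≤ scaledEnergy α β A (δ * ENNReal.ofReal (c ^ (1 + β)))
          (ε * ENNReal.ofReal (c ^ (β - α))) (F ∩ closedBall 0 r) +
        ENNReal.ofReal (A * r ^ β) * volume (F \ closedBall 0 r) := by
        gcongr
        exact h.mul_scaledEnergy_le hc (h.measurableSet.inter measurableSet_closedBall) hvol
    _ ≤ δ * 1 * perimeter F + ε * 1 * rieszEnergy α F + (potEnergy β A (F ∩ closedBall 0 r) +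
          ENNReal.ofReal (A * r ^ β) * volume (F \ closedBall 0 r)) := by
        rw [scaledEnergy, add_assoc]
        gcongr
        exact rieszEnergy_mono Set.inter_subset_left
    _ ≤ δ * 1 * perimeter F + ε * 1 * rieszEnergy α F + potEnergy β A F := by
        gcongr
        exact potEnergy_inter_closedBall_add_le hβ hA hr
    _ = scaledEnergy α β A δ ε F := by rw [mul_one, mul_one, scaledEnergy]

theorem IsScaledMinimizer.perimeter_le_perimeter_inter_closedBall [NeZero n] (hαβ : α ≤ β)
    (hβ : 0 ≤ β) (hA : 0 ≤ A) (h : IsScaledMinimizer α β A δ ε F)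
    (hfin : scaledEnergy α β A δ ε F ≠ ∞) (hr : 0 ≤ r)
    (hsmall : ENNReal.ofReal ((n + β) / n) * scaledEnergy α β A δ ε F <
      ENNReal.ofReal (A * r ^ β) * volume (ball (0 : EuclideanSpace ℝ (Fin n)) 1))
    (hD : volume (F \ closedBall 0 r) ≠ 0) : perimeter F ≤ perimeter (F ∩ closedBall 0 r) := by
  set B := ball (0 : EuclideanSpace ℝ (Fin n)) 1
  set D := F \ closedBall 0 r
  set J := scaledEnergy α β A δ ε F
  have hs : 1 ≤ (n + β) / n := (one_le_div (Nat.cast_pos.2 (NeZero.pos n))).2 (by linarith)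
  have hG : volume (F ∩ closedBall 0 r) + volume D = volume B := by
    rw [measure_inter_add_sdiff F measurableSet_closedBall, h.volume_eq]
  have hDB : volume D < volume B := by
    refine lt_of_mul_lt_mul_left' (a := ENNReal.ofReal (A * r ^ β)) ?_
    calc ENNReal.ofReal (A * r ^ β) * volume D ≤ J :=
          (le_add_self.trans (potEnergy_inter_closedBall_add_le hβ hA hr)).trans le_add_self
      _ ≤ ENNReal.ofReal ((n + β) / n) * J :=
          le_mul_of_one_le_left' (ENNReal.one_le_ofReal.2 hs)
      _ < ENNReal.ofReal (A * r ^ β) * volume B := hsmall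
  by_contra! hP
  obtain ⟨c, hc, hc1, hvol, hbern⟩ := exists_volume_eq_of_volume_add_eq_ball hβ hG hDB
  have hcomp := h.mul_scaledEnergy_add_le hαβ hβ hA hr hc hc1 hvol hP.le
  have hgain : ENNReal.ofReal (c ^ (n + β)) * J * volume B +
      volume D * (ENNReal.ofReal (A * r ^ β) * volume B) ≤
      ENNReal.ofReal (c ^ (n + β)) * J * volume B +
        volume D * (ENNReal.ofReal ((n + β) / n) * J) :=
    calc _ = (ENNReal.ofReal (c ^ (n + β)) * J + ENNReal.ofReal (A * r ^ β) * volume D) *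
            volume B := by ring
      _ ≤ J * volume B := by gcongr
      _ ≤ J * (ENNReal.ofReal (c ^ (n + β)) * volume B +
            ENNReal.ofReal ((n + β) / n) * volume D) := by gcongr
      _ = _ := by ring
  have hSJ : ENNReal.ofReal (c ^ (n + β)) * J * volume B ≠ ∞ :=
    ENNReal.mul_ne_top (ENNReal.mul_ne_top ENNReal.ofReal_ne_top hfin) measure_ball_lt_top.ne
  exact hsmall.not_ge ((ENNReal.mul_le_mul_iff_right hD
    (hDB.trans measure_ball_lt_top).ne).1 ((ENNReal.add_le_add_iff_left hSJ).1 hgain))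

end Comparison

/-! ### The limit of large mass -/

section LargeMass

variable {n : ℕ} [NeZero n] {α β A a b : ℝ} {ι : Type*} {l : Filter ι} {δ ε : ι → ℝ≥0∞}
  {F : ι → Set (EuclideanSpace ℝ (Fin n))}

theorem tendsto_scaledEnergy_ball (hα : 0 < α) (hαn : α ≤ n) (hδ : Tendsto δ l (𝓝 0))
    (hε : Tendsto ε l (𝓝 0)) :
    Tendsto (fun i => scaledEnergy α β A (δ i) (ε i) (ball (0 : EuclideanSpace ℝ (Fin n)) 1)) l
      (𝓝 (potEnergy β A (ball (0 : EuclideanSpace ℝ (Fin n)) 1))) := by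
  have hP := ENNReal.Tendsto.mul_const hδ (Or.inr (perimeter_ball_ne_top (n := n)))
  have hV := ENNReal.Tendsto.mul_const hε
    (Or.inr (rieszEnergy_ne_top hα hαn (measure_ball_lt_top (x := 0) (r := 1)).ne))
  simpa only [scaledEnergy, zero_mul, zero_add] using (hP.add hV).add_const _

theorem eventually_scaledEnergy_ne_top (hα : 0 < α) (hαn : α ≤ n) (hβ : 0 ≤ β) (hA : 0 ≤ A)
    (hδ : Tendsto δ l (𝓝 0)) (hε : Tendsto ε l (𝓝 0))
    (hF : ∀ᶠ i in l, IsScaledMinimizer α β A (δ i) (ε i) (F i)) :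
    ∀ᶠ i in l, scaledEnergy α β A (δ i) (ε i) (F i) ≠ ∞ := by
  filter_upwards [hF, (tendsto_scaledEnergy_ball hα hαn hδ hε).eventually_lt_const
    (potEnergy_ball_ne_top hβ hA).lt_top] with i hi hfin
  exact (hi.scaledEnergy_le_ball.trans_lt hfin).ne

theorem tendsto_mul_volume_sdiff_add (hα : 0 < α) (hαn : α ≤ n) (hβ : 0 ≤ β) (hA : 0 ≤ A)
    (ha : 0 ≤ a) (ha1 : a ≤ 1) (hb : 1 ≤ b) (hδ : Tendsto δ l (𝓝 0)) (hε : Tendsto ε l (𝓝 0))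
    (hF : ∀ᶠ i in l, IsScaledMinimizer α β A (δ i) (ε i) (F i)) :
    Tendsto (fun i => ENNReal.ofReal (A * (1 - a ^ β)) * volume (ball 0 a \ F i) +
      ENNReal.ofReal (A * (b ^ β - 1)) * volume (F i \ closedBall 0 b)) l (𝓝 0) := by
  set U := potEnergy β A (ball (0 : EuclideanSpace ℝ (Fin n)) 1)
  have hU : U ≠ ∞ := potEnergy_ball_ne_top hβ hA
  have hsub := ENNReal.Tendsto.sub (tendsto_scaledEnergy_ball (β := β) (A := A) hα hαn hδ hε)
    (tendsto_const_nhds (x := U)) (Or.inl hU)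
  rw [tsub_self] at hsub
  refine tendsto_of_tendsto_of_tendsto_of_le_of_le' tendsto_const_nhds hsub
    (Eventually.of_forall fun _ => zero_le) ?_
  filter_upwards [hF] with i hi
  refine ENNReal.le_sub_of_add_le_left hU ?_
  rw [← add_assoc]
  calc _ ≤ potEnergy β A (F i) :=
        potEnergy_ball_add_volume_sdiff_le hβ hA hi.measurableSet hi.volume_eq ha ha1 hb
    _ ≤ scaledEnergy α β A (δ i) (ε i) (F i) := le_add_self
    _ ≤ _ := hi.scaledEnergy_le_ball

theorem tendsto_volume_ball_sdiff (hα : 0 < α) (hαn : α ≤ n) (hβ : 0 < β) (hA : 0 < A)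
    (ha : 0 ≤ a) (ha1 : a < 1) (hδ : Tendsto δ l (𝓝 0)) (hε : Tendsto ε l (𝓝 0))
    (hF : ∀ᶠ i in l, IsScaledMinimizer α β A (δ i) (ε i) (F i)) :
    Tendsto (fun i => volume (ball 0 a \ F i)) l (𝓝 0) := by
  have hlim := tendsto_mul_volume_sdiff_add hα hαn hβ.le hA.le ha ha1.le le_rfl hδ hε hF
  have hpos : ENNReal.ofReal (A * (1 - a ^ β)) ≠ 0 :=
    (ENNReal.ofReal_pos.2 (mul_pos hA (sub_pos.2 (Real.rpow_lt_one ha ha1 hβ)))).ne'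
  simp only [Real.one_rpow, sub_self, mul_zero, ENNReal.ofReal_zero, zero_mul, add_zero] at hlim
  simpa only [← mul_assoc, ENNReal.inv_mul_cancel hpos ENNReal.ofReal_ne_top, one_mul, mul_zero]
    using ENNReal.Tendsto.const_mul hlim (Or.inr (ENNReal.inv_ne_top.2 hpos))

theorem tendsto_volume_sdiff_closedBall (hα : 0 < α) (hαn : α ≤ n) (hβ : 0 < β) (hA : 0 < A)
    (hb : 1 < b) (hδ : Tendsto δ l (𝓝 0)) (hε : Tendsto ε l (𝓝 0))
    (hF : ∀ᶠ i in l, IsScaledMinimizer α β A (δ i) (ε i) (F i)) :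
    Tendsto (fun i => volume (F i \ closedBall 0 b)) l (𝓝 0) := by
  have hlim := tendsto_mul_volume_sdiff_add hα hαn hβ.le hA.le zero_le_one le_rfl hb.le hδ hε hF
  have hpos : ENNReal.ofReal (A * (b ^ β - 1)) ≠ 0 :=
    (ENNReal.ofReal_pos.2 (mul_pos hA (sub_pos.2 (Real.one_lt_rpow hb hβ)))).ne'
  simp only [Real.one_rpow, sub_self, mul_zero, ENNReal.ofReal_zero, zero_mul, zero_add] at hlim
  simpa only [← mul_assoc, ENNReal.inv_mul_cancel hpos ENNReal.ofReal_ne_top, one_mul, mul_zero]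
    using ENNReal.Tendsto.const_mul hlim (Or.inr (ENNReal.inv_ne_top.2 hpos))

theorem eventually_volume_ball_sdiff_eq_zero (hα : 0 < α) (hαn : α ≤ n) (hβ : 0 < β) (hA : 0 < A)
    (ha : 0 ≤ a) (ha1 : a < 1) (hδ : Tendsto δ l (𝓝 0)) (hδ0 : ∀ᶠ i in l, δ i ≠ 0)
    (hε : Tendsto ε l (𝓝 0))
    (hF : ∀ᶠ i in l, IsScaledMinimizer α β A (δ i) (ε i) (F i)) :
    ∀ᶠ i in l, volume (ball 0 a \ F i) = 0 := by
  obtain ⟨b, hab, hb1⟩ := exists_between ha1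
  obtain ⟨c, hc, hKc⟩ := exists_pos_mul_lt (sub_pos.2 hab) (2 ^ n * (decayConst n : ℝ))
  have hcpos : 0 < ENNReal.ofReal (c ^ n) := ENNReal.ofReal_pos.2 (pow_pos hc n)
  have hb0 : 0 ≤ b := ha.trans hab.le
  have hAb : ENNReal.ofReal (A * b ^ β) < ENNReal.ofReal A :=
    (ENNReal.ofReal_lt_ofReal_iff hA).2 (mul_lt_of_lt_one_right hA (Real.rpow_lt_one hb0 hb1 hβ))
  have hC : 2 * rieszLocalMass n α + 3 * volume (ball (0 : EuclideanSpace ℝ (Fin n)) 1) ≠ ∞ :=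
    ENNReal.add_ne_top.2 ⟨ENNReal.mul_ne_top ENNReal.ofNat_ne_top (rieszLocalMass_ne_top hα),
      ENNReal.mul_ne_top ENNReal.ofNat_ne_top measure_ball_lt_top.ne⟩
  have hsmall := (ENNReal.Tendsto.mul_const (ENNReal.Tendsto.const_mul hε
    (Or.inr (ENNReal.ofReal_ne_top (r := 2 ^ ((n + β) / n))))) (Or.inr hC)).add_const
      (ENNReal.ofReal (A * b ^ β))
  rw [mul_zero, zero_mul, zero_add] at hsmall
  filter_upwards [hF, hδ0, eventually_scaledEnergy_ne_top hα hαn hβ.le hA.le hδ hε hF,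
    (tendsto_volume_ball_sdiff hα hαn hβ hA hb0 hb1 hδ hε hF).eventually_le_const hcpos,
    hsmall.eventually_lt_const hAb] with i hi hδi hfin hvol hsmalli
  refine volume_ball_sdiff_eq_zero hi.measurableSet
    (perimeter_ne_top_of_scaledEnergy_ne_top hδi hfin) hab hc hKc hvol fun r hr hD => ?_
  have hr0 : 0 ≤ r := ha.trans hr.1.le
  refine hi.perimeter_le_perimeter_union_ball hα hαn hβ.le hA.le hfin (hr.2.trans hb1).le
    (lt_of_le_of_lt ?_ hsmalli) hD
  gcongr
  exact hr.2.le

theorem eventually_volume_sdiff_closedBall_eq_zero (hα : 0 < α) (hαn : α ≤ n) (hαβ : α ≤ β)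
    (hβ : 0 < β) (hA : 0 < A) (hb : 1 < b) (hδ : Tendsto δ l (𝓝 0)) (hδ0 : ∀ᶠ i in l, δ i ≠ 0)
    (hε : Tendsto ε l (𝓝 0))
    (hF : ∀ᶠ i in l, IsScaledMinimizer α β A (δ i) (ε i) (F i)) :
    ∀ᶠ i in l, volume (F i \ closedBall 0 b) = 0 := by
  obtain ⟨a, ha1, hab⟩ := exists_between hb
  obtain ⟨c, hc, hKc⟩ := exists_pos_mul_lt (sub_pos.2 hab) (2 ^ n * (decayConst n : ℝ))
  have hcpos : 0 < ENNReal.ofReal (c ^ n) := ENNReal.ofReal_pos.2 (pow_pos hc n)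
  have ha0 : 0 < a := zero_lt_one.trans ha1
  set B := ball (0 : EuclideanSpace ℝ (Fin n)) 1
  have hAa : ENNReal.ofReal A * volume B < ENNReal.ofReal (A * a ^ β) * volume B := by
    refine (ENNReal.mul_lt_mul_iff_left (measure_ball_pos _ _ one_pos).ne'
      measure_ball_lt_top.ne).2 ((ENNReal.ofReal_lt_ofReal_iff (by positivity)).2 ?_)
    exact lt_mul_of_one_lt_right hA (Real.one_lt_rpow ha1 hβ)
  have hlim := ENNReal.Tendsto.const_mul
    (tendsto_scaledEnergy_ball (β := β) (A := A) hα hαn hδ hε)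
    (Or.inr (ENNReal.ofReal_ne_top (r := (n + β) / n)))
  rw [potEnergy_ball hβ.le hA.le] at hlim
  filter_upwards [hF, hδ0, eventually_scaledEnergy_ne_top hα hαn hβ.le hA.le hδ hε hF,
    (tendsto_volume_sdiff_closedBall hα hαn hβ hA ha1 hδ hε hF).eventually_le_const hcpos,
    hlim.eventually_lt_const hAa] with i hi hδi hfin hvol hsmall
  refine volume_sdiff_closedBall_eq_zero hi.measurableSet
    (perimeter_ne_top_of_scaledEnergy_ne_top hδi hfin)
    (hi.volume_eq ▸ measure_ball_lt_top.ne) hab hc hKc hvol fun r hr hD => ?_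
  refine hi.perimeter_le_perimeter_inter_closedBall hαβ hβ.le hA.le hfin (ha0.trans hr.1).le
    ?_ hD
  calc ENNReal.ofReal ((n + β) / n) * scaledEnergy α β A (δ i) (ε i) (F i)
    _ ≤ ENNReal.ofReal ((n + β) / n) * scaledEnergy α β A (δ i) (ε i) B := by
        gcongr
        exact hi.scaledEnergy_le_ball
    _ < ENNReal.ofReal (A * a ^ β) * volume B := hsmall
    _ ≤ ENNReal.ofReal (A * r ^ β) * volume B := by
        gcongr
        exact hr.1.le

theorem tendsto_hausdorffEDist_essBoundary_sphere (hα : 0 < α) (hαn : α ≤ n) (hαβ : α ≤ β)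
    (hβ : 0 < β) (hA : 0 < A) (hδ : Tendsto δ l (𝓝 0)) (hδ0 : ∀ᶠ i in l, δ i ≠ 0)
    (hε : Tendsto ε l (𝓝 0))
    (hF : ∀ᶠ i in l, IsScaledMinimizer α β A (δ i) (ε i) (F i)) :
    Tendsto (fun i => hausdorffEDist (essBoundary (F i)) (sphere 0 1)) l (𝓝 0) := by
  refine ENNReal.tendsto_nhds_zero.2 fun e he => ?_
  have hcont : Tendsto (fun η : ℝ => ENNReal.ofReal (2 * η)) (𝓝 0) (𝓝 0) :=
    (ENNReal.continuous_ofReal.comp (continuous_const_mul 2)).tendsto' 0 0 (by simp)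
  obtain ⟨η, hηe, hη, hη2⟩ :=
    (((hcont.mono_left nhdsWithin_le_nhds).eventually_le_const he).and
      (Ioo_mem_nhdsGT (show (0 : ℝ) < 1 / 2 by norm_num))).exists
  filter_upwards [hF,
    eventually_volume_ball_sdiff_eq_zero hα hαn hβ hA (sub_nonneg.2 (by linarith))
      (sub_lt_self 1 hη) hδ hδ0 hε hF,
    eventually_volume_sdiff_closedBall_eq_zero hα hαn hαβ hβ hA (lt_add_of_pos_right 1 hη)
      hδ hδ0 hε hF] with i hi hin hout
  exact (hausdorffEDist_essBoundary_sphere_le hi.measurableSet hη hη2 hin hout).trans hηe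

end LargeMass

/-- Hausdorff convergence of the (rescaled) boundaries of large volume minimizers to the
unit sphere, when `α < β`. -/
theorem statement1 (n : ℕ) (hn : 1 ≤ n) (α β A : ℝ)
    (hα0 : 0 < α) (hαn : α < n) (hβ : 0 < β) (hA : 0 < A) (hαβ : α < β)
    (E : ℝ → Set (EuclideanSpace ℝ (Fin n)))
    (hE : ∀ m, 0 < m → IsMinimizer α β A m (E m)) :
    Filter.Tendsto
      (fun m : ℝ => EMetric.hausdorffEdist
        (essBoundary ((((volume (unitBall n)).toReal / m) ^ (1 / (n : ℝ))) • E m))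
        (Metric.sphere (0 : EuclideanSpace ℝ (Fin n)) 1))
      Filter.atTop (nhds 0) := by
  have : NeZero n := ⟨by omega⟩
  have hmin : ∀ᶠ m in atTop, IsScaledMinimizer α β A (ENNReal.ofReal (ballRadius n m ^ (-1 - β)))
      (ENNReal.ofReal (ballRadius n m ^ (α - β))) ((ballRadius n m)⁻¹ • E m) := by
    filter_upwards [eventually_gt_atTop 0] with m hm
    exact (hE m hm).isScaledMinimizer (ballRadius_pos hm)
      (ofReal_ballRadius_pow_mul_volume_ball hm.le).symm
  have hδ : ∀ᶠ m in atTop, ENNReal.ofReal (ballRadius n m ^ (-1 - β)) ≠ 0 := by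
    filter_upwards [eventually_gt_atTop 0] with m hm
    exact (ENNReal.ofReal_pos.2 (Real.rpow_pos_of_pos (ballRadius_pos hm) _)).ne'
  refine (tendsto_hausdorffEDist_essBoundary_sphere hα0 hαn.le hαβ.le hβ hA
    (tendsto_ofReal_ballRadius_rpow (by linarith)) hδ
    (tendsto_ofReal_ballRadius_rpow (by linarith)) hmin).congr' ?_
  filter_upwards [eventually_gt_atTop 0] with m hm
  rw [inv_ballRadius hm.le]
  rfl
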